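/- arXiv:0811.4230 — 2 statements merged into one kernel-verified Lean document; each statement's English description precedes it below -/
import Mathlib

section
/- Let π : (X,T) → (Y,S) be a factor map between general topological dynamical systems and let ν be an ergodic S-invariant Borel probability measure on Y. Then there exists a countable compact subset K ⊆ X with h(T,K) = h(T,X|ν), where h(T,X|ν) = ∫_Y h(T, π^{−1}(y)) dν(y). -/
open Filter Set Metric MeasureTheory
open scoped ENNReal Topology

noncomputable section

variable {X Y : Type*}

def IsSep [PseudoMetricSpace X] (T : X → X) (n : ℕ) (ε : ℝ) (E : Set X) : Prop :=
  E.Pairwise fun x y => ∃ i < n, ε < dist (T^[i] x) (T^[i] y)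

def sepMaxCard [PseudoMetricSpace X] (T : X → X) (n : ℕ) (ε : ℝ) (K : Set X) : ℝ≥0∞ :=
  ⨆ (E : Finset X) (_ : ↑E ⊆ K ∧ IsSep T n ε (↑E : Set X)), (E.card : ℝ≥0∞)

def sepEnt [PseudoMetricSpace X] (T : X → X) (ε : ℝ) (K : Set X) : EReal :=
  Filter.atTop.limsup fun n : ℕ => ENNReal.log (sepMaxCard T n ε K) / (n : EReal)

def subEnt [PseudoMetricSpace X] (T : X → X) (K : Set X) : EReal :=
  ⨆ (ε : ℝ) (_ : 0 < ε), sepEnt T ε K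

/-- `(X,T)` is lowerable. -/
def Lowerable [PseudoMetricSpace X] (T : X → X) : Prop :=
  ∀ h : EReal, 0 ≤ h → h ≤ subEnt T (univ : Set X) →
    ∃ K : Set X, K.Nonempty ∧ IsCompact K ∧ subEnt T K = h

/-- `(X,T)` is hereditarily lowerable. -/
def HerLowerable [PseudoMetricSpace X] (T : X → X) : Prop :=
  ∀ K : Set X, K.Nonempty → IsCompact K → ∀ h : EReal, 0 ≤ h → h ≤ subEnt T K →
    ∃ K' : Set X, K' ⊆ K ∧ K'.Nonempty ∧ IsCompact K' ∧ subEnt T K' = h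

/-- `(X,T)` is hereditarily uniformly lowerable: the lowering subset can moreover be chosen
with at most one limit (accumulation) point. -/
def HUL [PseudoMetricSpace X] (T : X → X) : Prop :=
  ∀ K : Set X, K.Nonempty → IsCompact K → ∀ h : EReal, 0 ≤ h → h ≤ subEnt T K →
    ∃ K' : Set X, K' ⊆ K ∧ K'.Nonempty ∧ IsCompact K' ∧ subEnt T K' = h ∧
      {x | AccPt x (𝓟 K')}.Subsingleton

/-- `Φ_ε(x) = {y : d(T^n x, T^n y) ≤ ε for all n ≥ 0}`. -/
def Phi [PseudoMetricSpace X] (T : X → X) (ε : ℝ) (x : X) : Set X :=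
  {y | ∀ n : ℕ, dist (T^[n] x) (T^[n] y) ≤ ε}

/-- `h*_T(ε) = sup_x h(T, Φ_ε(x))`. -/
def hStar [PseudoMetricSpace X] (T : X → X) (ε : ℝ) : EReal :=
  ⨆ x : X, subEnt T (Phi T ε x)

/-- `(X,T)` is asymptotically `h`-expansive: `h*_T(ε) → 0` as `ε → 0+`. -/
def AsympHExpansive [PseudoMetricSpace X] (T : X → X) : Prop :=
  Tendsto (fun ε : ℝ => hStar T ε) (𝓝[>] 0) (𝓝 (0 : EReal))

/-- `T^n` for `n : ℤ`, for a homeomorphism `T`. -/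
def iterZ [TopologicalSpace X] (T : X ≃ₜ X) : ℤ → X → X
  | Int.ofNat n => (⇑T)^[n]
  | Int.negSucc n => (⇑T.symm)^[n + 1]

/-- `T` is expansive with expansive constant `δ`. -/
def ExpansiveWith [MetricSpace X] (T : X ≃ₜ X) (δ : ℝ) : Prop :=
  ∀ x y : X, x ≠ y → ∃ n : ℤ, δ < dist (iterZ T n x) (iterZ T n y)

/-- `K ⪰ 𝒲` : `K` is contained in some member of the family `𝒲`. -/
def Refines (K : Set X) (W : Finset (Set X)) : Prop := ∃ A ∈ W, K ⊆ A

/-- The join `U ∨ V` of two finite covers. -/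
def covJoin (U V : Finset (Set X)) : Finset (Set X) :=
  letI := Classical.decEq (Set X)
  (U ×ˢ V).image fun p => p.1 ∩ p.2

/-- `dynCov T U n = U_0^{n-1} = ⋁_{i=0}^{n-1} T^{-i} U` (with `U_0^{-1} = {univ}`). -/
def dynCov (T : X → X) (U : Finset (Set X)) : ℕ → Finset (Set X)
  | 0 => {(univ : Set X)}
  | n + 1 =>
      letI := Classical.decEq (Set X)
      covJoin (dynCov T U n) (U.image fun A => T^[n] ⁻¹' A)

/-- `n_{T,U}(K)`: `0` if `K ⋠ U`; `+∞` if `T^i K ⪰ U` for all `i`; otherwise the largest `j`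
with `T^i K ⪰ U` for all `0 ≤ i ≤ j-1`. -/
def nTU (T : X → X) (U : Finset (Set X)) (K : Set X) : ℕ∞ :=
  ⨆ (j : ℕ) (_ : ∀ i < j, Refines (T^[i] '' K) U), (j : ℕ∞)

/-- `e^{-λ n}` for `n : ℕ∞`, valued in `ℝ≥0∞` (with the conventions `e^{-λ·∞} = 0` for `λ > 0`,
`= 1` for `λ = 0` and `= ∞` for `λ < 0`). -/
def expWeight (lam : ℝ) (n : ℕ∞) : ℝ≥0∞ :=
  if n = ⊤ then (if 0 < lam then 0 else if lam = 0 then 1 else ⊤)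
  else ENNReal.ofReal (Real.exp (-(lam * (n.toNat : ℝ))))

/-- `m_{T,U}(K,λ,k)`: the infimum of `∑_{E ∈ 𝓔} e^{-λ n_{T,U}(E)}` over all countable families
`𝓔` of subsets of `X` with `∪𝓔 ⊇ K` and `E ⪰ U_0^{k-1}` for every `E ∈ 𝓔`. -/
def mTU (T : X → X) (U : Finset (Set X)) (K : Set X) (lam : ℝ) (k : ℕ) : ℝ≥0∞ :=
  ⨅ (ℰ : Set (Set X)) (_ : ℰ.Countable ∧ K ⊆ ⋃₀ ℰ ∧ ∀ E ∈ ℰ, Refines E (dynCov T U k)),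
    ∑' E : ℰ, expWeight lam (nTU T U (E : Set X))

/-- `m_{T,U}(K,λ) = lim_{k→∞} m_{T,U}(K,λ,k)`; since `m_{T,U}(K,λ,k)` is nondecreasing in `k`,
the limit is the supremum. -/
def mTUlim (T : X → X) (U : Finset (Set X)) (K : Set X) (lam : ℝ) : ℝ≥0∞ :=
  ⨆ k : ℕ, mTU T U K lam k

/-- `h^B_U(T,K) = inf {λ : m_{T,U}(K,λ) = 0}`. -/
def hBU (T : X → X) (U : Finset (Set X)) (K : Set X) : EReal :=
  ⨅ (lam : ℝ) (_ : mTUlim T U K lam = 0), (lam : EReal)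

/-- The dimensional entropy `h^B(T,K) = sup_U h^B_U(T,K)`, supremum over finite open covers. -/
def hB [TopologicalSpace X] (T : X → X) (K : Set X) : EReal :=
  ⨆ (U : Finset (Set X)) (_ : (∀ A ∈ U, IsOpen A) ∧ ⋃₀ (↑U : Set (Set X)) = univ),
    hBU T U K

/-- `N(U,K)`: the minimal cardinality of a subfamily of `U` covering `K` (`0` for `K = ∅`,
`∞` if no subfamily covers `K`). -/
def covCard (U : Finset (Set X)) (K : Set X) : ℝ≥0∞ :=
  ⨅ (V : Finset (Set X)) (_ : V ⊆ U ∧ K ⊆ ⋃₀ (↑V : Set (Set X))), (V.card : ℝ≥0∞)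

/-- `h_U(T,K) = limsup_{n→∞} (1/n) log N(U_0^{n-1},K)`. -/
def hCov (T : X → X) (U : Finset (Set X)) (K : Set X) : EReal :=
  Filter.atTop.limsup fun n : ℕ => ENNReal.log (covCard (dynCov T U n) K) / (n : EReal)

/-- Topological entropy of a subset via open covers: `h(T,K) = sup_U h_U(T,K)`. -/
def hCovSup [TopologicalSpace X] (T : X → X) (K : Set X) : EReal :=
  ⨆ (U : Finset (Set X)) (_ : (∀ A ∈ U, IsOpen A) ∧ ⋃₀ (↑U : Set (Set X)) = univ),
    hCov T U K

/-- The atom of the (finite) partition `P` containing `x`. -/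
def atomAt (P : Finset (Set X)) (x : X) : Set X := ⋃₀ {A | A ∈ P ∧ x ∈ A}

/-- `P` is a finite Borel partition. -/
def IsFinPartition [MeasurableSpace X] (P : Finset (Set X)) : Prop :=
  (∀ A ∈ P, MeasurableSet A) ∧ ⋃₀ (↑P : Set (Set X)) = univ ∧
    (↑P : Set (Set X)).Pairwise fun A B => Disjoint A B

/-- The Shannon entropy `H_μ(P) = ∑_{A ∈ P} -μ(A) log μ(A)` of a finite partition. -/
def partEnt [MeasurableSpace X] (μ : Measure X) (P : Finset (Set X)) : ℝ :=
  ∑ A ∈ P, -((μ A).toReal * Real.log (μ A).toReal)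

/-- The measure-theoretic (Kolmogorov–Sinai) entropy `h_μ(T)`: the supremum over finite Borel
partitions `P` of `lim_n (1/n) H_μ(P_0^{n-1})`; by subadditivity this limit is the infimum. -/
def ksEntropy [MeasurableSpace X] (T : X → X) (μ : Measure X) : EReal :=
  ⨆ (P : Finset (Set X)) (_ : IsFinPartition P),
    ⨅ n : ℕ, ((partEnt μ (dynCov T P (n + 1)) / (n + 1) : ℝ) : EReal)

/-- `π` is a principal factor map from `(X,T)` to `(Y,S)` : `h_μ(T) = h_{πμ}(S)` for every
`T`-invariant Borel probability measure `μ`. -/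
def IsPrincipal [MeasurableSpace X] [MeasurableSpace Y] (T : X → X) (S : Y → Y)
    (π : X → Y) : Prop :=
  ∀ μ : Measure X, IsProbabilityMeasure μ → Measure.map T μ = μ →
    ksEntropy T μ = ksEntropy S (Measure.map π μ)

/-- The relative topological entropy `h_top(T,X|π) = sup_{y ∈ Y} h(T, π^{-1}(y))`. -/
def relEnt [PseudoMetricSpace X] (T : X → X) (π : X → Y) : EReal :=
  ⨆ y : Y, subEnt T (π ⁻¹' {y})

/-- The canonical conversion `EReal → ℝ≥0∞` (`⊥` and negative reals go to `0`). -/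
def erealToENNReal (x : EReal) : ℝ≥0∞ := if x = ⊤ then ⊤ else ENNReal.ofReal x.toReal


open ExpGrowth in
theorem sepEnt_eq [PseudoMetricSpace X] (T : X → X) (ε : ℝ) (K : Set X) :
    sepEnt T ε K = expGrowthSup (fun n => sepMaxCard T n ε K) := rfl

theorem sepMaxCard_mono [PseudoMetricSpace X] (T : X → X) (n : ℕ) (ε : ℝ) {A B : Set X}
    (h : A ⊆ B) : sepMaxCard T n ε A ≤ sepMaxCard T n ε B :=
  iSup₂_le fun E hE => le_iSup₂_of_le E ⟨hE.1.trans h, hE.2⟩ le_rfl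

theorem sepMaxCard_eps [PseudoMetricSpace X] (T : X → X) (n : ℕ) {ε δ : ℝ} (K : Set X)
    (h : ε ≤ δ) : sepMaxCard T n δ K ≤ sepMaxCard T n ε K :=
  iSup₂_le fun E hE => le_iSup₂_of_le E ⟨hE.1, hE.2.mono' fun _ _ ⟨i, hi, hd⟩ =>
    ⟨i, hi, h.trans_lt hd⟩⟩ le_rfl

theorem sepMaxCard_union [PseudoMetricSpace X] (T : X → X) (n : ℕ) (ε : ℝ) (A B : Set X) :
    sepMaxCard T n ε (A ∪ B) ≤ sepMaxCard T n ε A + sepMaxCard T n ε B := by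
  classical
  refine iSup₂_le fun E hE => ?_
  have h1 : ((E.filter (· ∈ A)).card : ℝ≥0∞) ≤ sepMaxCard T n ε A :=
    le_iSup₂_of_le (E.filter (· ∈ A)) ⟨fun x hx => (by simpa using hx : x ∈ E ∧ x ∈ A).2,
      hE.2.mono (by intro x hx; exact (by simpa using hx : x ∈ E ∧ x ∈ A).1)⟩ le_rfl
  have h2 : ((E.filter (¬ · ∈ A)).card : ℝ≥0∞) ≤ sepMaxCard T n ε B := by
    refine le_iSup₂_of_le (E.filter (¬ · ∈ A)) ⟨fun x hx => ?_, hE.2.mono ?_⟩ le_rfl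
    · have hx' : x ∈ E ∧ x ∉ A := by simpa using hx
      exact (hE.1 hx'.1).resolve_left hx'.2
    · intro x hx
      exact (by simpa using hx : x ∈ E ∧ x ∉ A).1
  have h3 := Finset.card_filter_add_card_filter_not (s := E) (· ∈ A)
  calc (E.card : ℝ≥0∞) = ((E.filter (· ∈ A)).card : ℝ≥0∞) + ((E.filter (¬ · ∈ A)).card : ℝ≥0∞) := by
        rw [← h3]; push_cast; rfl
    _ ≤ _ := add_le_add h1 h2

theorem sepEnt_mono [PseudoMetricSpace X] (T : X → X) (ε : ℝ) {A B : Set X}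
    (h : A ⊆ B) : sepEnt T ε A ≤ sepEnt T ε B :=
  ExpGrowth.expGrowthSup_monotone fun n => sepMaxCard_mono T n ε h

theorem sepEnt_eps [PseudoMetricSpace X] (T : X → X) {ε δ : ℝ} (K : Set X)
    (h : ε ≤ δ) : sepEnt T δ K ≤ sepEnt T ε K :=
  ExpGrowth.expGrowthSup_monotone fun n => sepMaxCard_eps T n K h

theorem sepEnt_union [PseudoMetricSpace X] (T : X → X) (ε : ℝ) (A B : Set X) :
    sepEnt T ε (A ∪ B) ≤ max (sepEnt T ε A) (sepEnt T ε B) := by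
  have : sepEnt T ε (A ∪ B) ≤ ExpGrowth.expGrowthSup
      ((fun n => sepMaxCard T n ε A) ⊔ (fun n => sepMaxCard T n ε B)) := by
    refine ExpGrowth.expGrowthSup_le_of_eventually_le (b := 2) (by simp) (.of_forall fun n => ?_)
    refine (sepMaxCard_union T n ε A B).trans ?_
    rw [two_mul]
    exact add_le_add le_sup_left le_sup_right
  rwa [ExpGrowth.expGrowthSup_sup] at this

theorem sepEnt_empty [PseudoMetricSpace X] (T : X → X) (ε : ℝ) :
    sepEnt T ε (∅ : Set X) = ⊥ := by
  rw [← ExpGrowth.expGrowthSup_zero, sepEnt_eq]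
  congr 1
  funext n
  refine le_antisymm (iSup₂_le fun E hE => ?_) bot_le
  have : E = ∅ := by
    have := hE.1
    rwa [subset_empty_iff, Finset.coe_eq_empty] at this
  simp [this]

theorem sepEnt_nonneg [PseudoMetricSpace X] (T : X → X) (ε : ℝ) {K : Set X} (hK : K.Nonempty) :
    0 ≤ sepEnt T ε K := by
  obtain ⟨x, hx⟩ := hK
  rw [← ExpGrowth.expGrowthSup_const (b := 1) (by simp) (by simp), sepEnt_eq]
  refine ExpGrowth.expGrowthSup_monotone fun n => ?_
  exact le_iSup₂_of_le {x} ⟨by simpa using hx, by simp [IsSep]⟩ (by simp)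

theorem subEnt_mono [PseudoMetricSpace X] (T : X → X) {A B : Set X}
    (h : A ⊆ B) : subEnt T A ≤ subEnt T B :=
  iSup₂_mono fun ε _ => sepEnt_mono T ε h

theorem subEnt_nonneg [PseudoMetricSpace X] (T : X → X) {K : Set X} (hK : K.Nonempty) :
    0 ≤ subEnt T K :=
  le_iSup₂_of_le 1 one_pos (sepEnt_nonneg T 1 hK)

/-- local to global -/
theorem sepEnt_le_of_local [PseudoMetricSpace X] (T : X → X) (ε : ℝ) {K : Set X}
    (hK : IsCompact K) (c : EReal)
    (h : ∀ x ∈ K, ∃ U ∈ 𝓝 x, sepEnt T ε (K ∩ U) ≤ c) : sepEnt T ε K ≤ c := by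
  have := hK.induction_on (p := fun s => sepEnt T ε (K ∩ s) ≤ c)
    (by simp [sepEnt_empty])
    (fun s t hst ht => (sepEnt_mono T ε (by gcongr)).trans ht)
    (fun s t hs ht => by
      rw [inter_union_distrib_left]
      exact (sepEnt_union T ε _ _).trans (max_le hs ht))
    (fun x hx => by
      obtain ⟨U, hU, h⟩ := h x hx
      exact ⟨U, mem_nhdsWithin_of_mem_nhds hU, h⟩)
  simpa using this

theorem subEnt_image [PseudoMetricSpace X] (T : X → X) {K : Set X} (hK : IsCompact K) :
    subEnt T K ≤ subEnt T (T '' K) := by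
  classical
  refine iSup₂_mono fun ε hε => sepEnt_le_of_local T ε hK _ fun x hx => ?_
  refine ⟨ball x (ε / 2), ball_mem_nhds x (by linarith), ?_⟩
  refine ExpGrowth.expGrowthSup_monotone fun n => iSup₂_le fun E hE => ?_
  have key : ∀ a ∈ E, ∀ b ∈ E, a ≠ b → ∃ i < n, ε < dist (T^[i] (T a)) (T^[i] (T b)) := by
    intro a ha b hb hab
    obtain ⟨i, hi, hd⟩ := hE.2 ha hb hab
    cases i with
    | zero =>
      have h1 := (hE.1 ha).2
      have h2 := (hE.1 hb).2
      have := dist_triangle_right a b x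
      simp only [mem_ball] at h1 h2
      simp at hd
      linarith
    | succ i => exact ⟨i, by omega, by simpa [Function.iterate_succ_apply] using hd⟩
  have hinj : Set.InjOn T E := by
    intro a ha b hb hab
    by_contra hne
    obtain ⟨i, -, hd⟩ := key a ha b hb hne
    rw [hab, dist_self] at hd
    linarith
  refine le_iSup₂_of_le (E.image T) ⟨?_, ?_⟩ (by rw [Finset.card_image_of_injOn hinj])
  · rw [Finset.coe_image]
    exact image_mono fun a ha => (hE.1 ha).1
  · rw [Finset.coe_image]
    rintro _ ⟨a, ha, rfl⟩ _ ⟨b, hb, rfl⟩ hab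
    exact key a ha b hb fun h => hab (h ▸ rfl)

theorem compact_cluster [TopologicalSpace X] (x : X) (A : ℕ → Set X) (hA : ∀ k, IsCompact (A k))
    (h : ∀ U ∈ 𝓝 x, ∀ᶠ k in atTop, A k ⊆ U) : IsCompact ({x} ∪ ⋃ k, A k) := by
  rw [isCompact_iff_ultrafilter_le_nhds]
  intro F hF
  by_cases hFx : (F : Filter X) ≤ 𝓝 x
  · exact ⟨x, by simp, hFx⟩
  obtain ⟨U, hU, hUF⟩ := Filter.not_le.1 hFx
  obtain ⟨N, hN⟩ := eventually_atTop.1 (h U hU)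
  have hc : IsCompact (⋃ k ∈ Finset.range N, A k) :=
    (Finset.range N).isCompact_biUnion fun k _ => hA k
  have hUc : Uᶜ ∈ F := Ultrafilter.compl_mem_iff_notMem.2 hUF
  have hmem : (⋃ k ∈ Finset.range N, A k) ∈ F := by
    filter_upwards [hUc, le_principal_iff.1 hF] with a ha hb
    rcases hb with hb | hb
    · exact absurd (mem_singleton_iff.1 hb ▸ mem_of_mem_nhds hU) ha
    · obtain ⟨k, hk⟩ := mem_iUnion.1 hb
      simp only [mem_iUnion, Finset.mem_range]
      refine ⟨k, ?_, hk⟩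
      by_contra hkN
      exact ha (hN k (not_lt.1 hkN) hk)
  obtain ⟨a, ha, hFa⟩ := isCompact_iff_ultrafilter_le_nhds.1 hc F (le_principal_iff.2 hmem)
  refine ⟨a, ?_, hFa⟩
  right
  simp only [mem_iUnion, Finset.mem_range] at ha ⊢
  obtain ⟨k, -, hk⟩ := ha
  exact ⟨k, hk⟩

theorem exists_finset_of_lt [PseudoMetricSpace X] (T : X → X) (ε : ℝ) (C : Set X) (c : EReal)
    (hc : c < sepEnt T ε C) (N : ℕ) : ∃ n ≥ N, ∃ E : Finset X, ↑E ⊆ C ∧ 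
      IsSep T n ε (↑E : Set X) ∧ c ≤ ENNReal.log (E.card : ℝ≥0∞) / (n : EReal) := by
  have h := Filter.frequently_lt_of_lt_limsup (by isBoundedDefault) hc
  obtain ⟨n, hn, hlt⟩ := (frequently_atTop.1 h) (max N 1)
  have hn0 : (0 : EReal) < n := by
    have : 0 < n := by omega
    exact_mod_cast this
  have hnt : (n : EReal) ≠ ⊤ := EReal.natCast_ne_top n
  rw [EReal.lt_div_iff hn0 hnt, ← EReal.log_exp (c * n), ENNReal.log_lt_log_iff,
    sepMaxCard] at hlt
  simp only [lt_iSup_iff] at hlt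
  obtain ⟨E, hE, hlt⟩ := hlt
  refine ⟨n, (le_max_left _ _).trans hn, E, hE.1, hE.2, ?_⟩
  rw [EReal.le_div_iff_mul_le hn0 hnt, ← EReal.log_exp (c * n)]
  exact ENNReal.log_monotone hlt.le

/-- a countable compact set near a point. -/
theorem exists_local_compact [MetricSpace X] (T : X → X) (ε : ℝ) {C : Set X} (hC : IsCompact C)
    (c : EReal) (hc : c < sepEnt T ε C) : ∃ x ∈ C, ∀ r > 0, ∃ K ⊆ C ∩ ball x r, K.Countable ∧
      IsCompact K ∧ c ≤ sepEnt T ε K := by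
  obtain ⟨x, hx, hU⟩ : ∃ x ∈ C, ∀ U ∈ 𝓝 x, c < sepEnt T ε (C ∩ U) := by
    by_contra! hcon
    exact absurd (sepEnt_le_of_local T ε hC c hcon) (not_le.2 hc)
  refine ⟨x, hx, fun r hr => ?_⟩
  have hpos : ∀ k : ℕ, 0 < min r (1 / ((k : ℝ) + 1)) := fun k => by positivity
  choose n hn E hEC hEs hEc using fun k : ℕ =>
    exists_finset_of_lt T ε _ c (hU _ (ball_mem_nhds x (hpos k))) k
  refine ⟨{x} ∪ ⋃ k, (E k : Set X), ?_, ?_, ?_, ?_⟩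
  · refine union_subset (by simpa using ⟨hx, hr⟩) (iUnion_subset fun k => (hEC k).trans ?_)
    exact inter_subset_inter_right _ (ball_subset_ball (min_le_left _ _))
  · exact (countable_singleton x).union (countable_iUnion fun k => (E k).countable_toSet)
  · refine compact_cluster x _ (fun k => (E k).finite_toSet.isCompact) fun U hU => ?_
    obtain ⟨δ, hδ, hb⟩ := Metric.mem_nhds_iff.1 hU
    have := (tendsto_one_div_add_atTop_nhds_zero_nat (𝕜 := ℝ)).eventually_lt_const hδ
    filter_upwards [this] with k hk
    exact ((hEC k).trans inter_subset_right).trans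
      ((ball_subset_ball ((min_le_right _ _).trans hk.le)).trans hb)
  · refine le_limsup_of_frequently_le ?_ (by isBoundedDefault)
    refine frequently_atTop.2 fun N => ⟨n N, hn N, (hEc N).trans ?_⟩
    refine EReal.div_le_div_right_of_nonneg (by positivity) (ENNReal.log_monotone ?_)
    exact le_iSup₂_of_le (E N) ⟨(subset_iUnion (fun k => (E k : Set X)) N).trans
      subset_union_right, hEs N⟩ le_rfl

theorem exists_countable_compact_subset [MetricSpace X] (T : X → X) {C : Set X}
    (hC : IsCompact C) (hne : C.Nonempty) :
    ∃ K ⊆ C, K.Countable ∧ IsCompact K ∧ subEnt T K = subEnt T C := by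
  have hbot : (⊥ : EReal) < subEnt T C := EReal.bot_lt_zero.trans_le (subEnt_nonneg T hne)
  obtain ⟨u, -, hu, hut⟩ := exists_seq_strictMono_tendsto' hbot
  have hε : ∀ m, ∃ ε, 0 < ε ∧ u m < sepEnt T ε C := by
    intro m
    have := (hu m).2
    unfold subEnt at this
    simp only [lt_iSup_iff] at this
    obtain ⟨ε, h1, h2⟩ := this
    exact ⟨ε, h1, h2⟩
  choose ε hε0 hε using hε
  choose x hxC hx using fun m => exists_local_compact T (ε m) hC (u m) (hε m)
  choose K hKC hKc hKk hKe using fun m : ℕ => hx m (1 / ((m : ℝ) + 1)) (by positivity)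
  obtain ⟨z, hz, φ, hφ, hφz⟩ := hC.tendsto_subseq hxC
  have hsub : {z} ∪ ⋃ j, K (φ j) ⊆ C := union_subset (by simpa using hz)
    (iUnion_subset fun j => (hKC _).trans inter_subset_left)
  refine ⟨{z} ∪ ⋃ j, K (φ j), hsub, ?_, ?_, le_antisymm (subEnt_mono T hsub) ?_⟩
  · exact (countable_singleton z).union (countable_iUnion fun k => hKc _)
  · refine compact_cluster z _ (fun k => hKk _) fun U hU => ?_
    obtain ⟨δ, hδ, hb⟩ := Metric.mem_nhds_iff.1 hU
    have h1 := ((tendsto_one_div_add_atTop_nhds_zero_nat (𝕜 := ℝ)).comp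
      hφ.tendsto_atTop).eventually_lt_const (half_pos hδ)
    have h2 := Metric.tendsto_nhds.1 hφz _ (half_pos hδ)
    filter_upwards [h1, h2] with k hk1 hk2 y hy
    apply hb
    have := (hKC _ hy).2
    rw [mem_ball] at this ⊢
    have h3 := dist_triangle y (x (φ k)) z
    simp only [Function.comp] at hk1 hk2
    linarith
  · refine le_of_tendsto' (hut.comp hφ.tendsto_atTop) fun j => ?_
    refine (hKe (φ j)).trans ?_
    refine le_iSup₂_of_le (ε (φ j)) (hε0 _) (sepEnt_mono T _ ?_)
    exact (subset_iUnion (fun j => K (φ j)) j).trans subset_union_right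

theorem measurable_sepMaxCard [MetricSpace X] [CompactSpace X]
    [MetricSpace Y] [CompactSpace Y] [MeasurableSpace Y] [BorelSpace Y]
    (T : X → X) (hT : Continuous T) (π : X → Y) (hπ : Continuous π) (n : ℕ) (ε : ℝ) (hε : 0 < ε) :
    Measurable fun y => sepMaxCard T n ε (π ⁻¹' {y}) := by
  classical
  let A : ∀ k : ℕ, Set (Y × (Fin k → X)) := fun k => {p | ∀ i, π (p.2 i) = p.1}
  let B : ∀ k : ℕ, Set (Y × (Fin k → X)) := fun k =>
    {p | ∀ i j, i ≠ j → ∃ m < n, ε < dist (T^[m] (p.2 i)) (T^[m] (p.2 j))}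
  have hA : ∀ k, IsClosed (A k) := by
    intro k
    simp only [A, setOf_forall]
    exact isClosed_iInter fun i => isClosed_eq (by fun_prop) (by fun_prop)
  have hB : ∀ k, IsOpen (B k) := by
    intro k
    have : B k = ⋂ i, ⋂ j, ⋂ (_ : i ≠ j), ⋃ m, ⋃ (_ : m < n),
        {p : Y × (Fin k → X) | ε < dist (T^[m] (p.2 i)) (T^[m] (p.2 j))} := by
      ext p; simp [B]
    rw [this]
    refine isOpen_iInter_of_finite fun i => isOpen_iInter_of_finite fun j =>
      isOpen_iInter_of_finite fun _ => isOpen_iUnion fun m => isOpen_iUnion fun _ => ?_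
    have hm : Continuous T^[m] := hT.iterate m
    exact isOpen_lt (by fun_prop) (by fun_prop)
  have hAB : ∀ k, MeasurableSet (Prod.fst '' (A k ∩ B k)) := by
    intro k
    obtain ⟨F, hF, -, hFU, -⟩ := (hB k).exists_iUnion_isClosed
    rw [← hFU, inter_iUnion, image_iUnion]
    exact MeasurableSet.iUnion fun m =>
      (((hA k).inter (hF m)).isCompact.image continuous_fst).measurableSet
  refine measurable_of_Ioi fun c => ?_
  have : (fun y => sepMaxCard T n ε (π ⁻¹' {y})) ⁻¹' Ioi c =
      ⋃ (k : ℕ) (_ : c < (k : ℝ≥0∞)), Prod.fst '' (A k ∩ B k) := by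
    ext y
    simp only [mem_preimage, mem_Ioi, sepMaxCard, lt_iSup_iff, mem_iUnion, exists_prop]
    constructor
    · rintro ⟨E, hE, hc⟩
      refine ⟨E.card, hc, (y, fun i => (E.equivFin.symm i : X)), ⟨fun i => ?_, fun i j hij => ?_⟩,
        rfl⟩
      · exact hE.1 (E.equivFin.symm i).2
      · exact hE.2 (E.equivFin.symm i).2 (E.equivFin.symm j).2
          fun h => hij (E.equivFin.symm.injective (Subtype.ext h))
    · rintro ⟨k, hc, ⟨y', g⟩, ⟨h1, h2⟩, rfl⟩
      have hinj : Function.Injective g := by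
        intro i j hij
        by_contra hne
        obtain ⟨m, -, hd⟩ := h2 i j hne
        simp only [hij, dist_self] at hd
        linarith
      refine ⟨Finset.univ.image g, ⟨?_, ?_⟩, ?_⟩
      · rintro _ hx
        simp only [Finset.coe_image, Finset.coe_univ, image_univ, mem_range] at hx
        obtain ⟨i, rfl⟩ := hx
        exact h1 i
      · intro a ha b hb hab
        simp only [Finset.coe_image, Finset.coe_univ, image_univ, mem_range] at ha hb
        obtain ⟨i, rfl⟩ := ha
        obtain ⟨j, rfl⟩ := hb
        exact h2 i j fun h => hab (h ▸ rfl)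
      · rwa [Finset.card_image_of_injective _ hinj, Finset.card_univ, Fintype.card_fin]
  rw [this]
  exact MeasurableSet.iUnion fun k => MeasurableSet.iUnion fun _ => hAB k

theorem subEnt_eq_iSup_nat [PseudoMetricSpace X] (T : X → X) (K : Set X) :
    subEnt T K = ⨆ m : ℕ, sepEnt T (1 / ((m : ℝ) + 1)) K := by
  refine le_antisymm (iSup₂_le fun ε hε => ?_) (iSup_le fun m => ?_)
  · obtain ⟨m, hm⟩ := exists_nat_one_div_lt hε
    exact le_iSup_of_le m (sepEnt_eps T K hm.le)
  · exact le_iSup₂_of_le (1 / ((m : ℝ) + 1)) (by positivity) le_rfl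

theorem measurable_subEnt [MetricSpace X] [CompactSpace X]
    [MetricSpace Y] [CompactSpace Y] [MeasurableSpace Y] [BorelSpace Y]
    (T : X → X) (hT : Continuous T) (π : X → Y) (hπ : Continuous π) :
    Measurable fun y => subEnt T (π ⁻¹' {y}) := by
  simp only [subEnt_eq_iSup_nat]
  refine Measurable.iSup fun m => ?_
  unfold sepEnt
  refine Measurable.limsup fun n => ?_
  simp only [div_eq_mul_inv]
  exact (measurable_sepMaxCard T hT π hπ n _ (by positivity)).ennreal_log.mul_const _

theorem erealToENNReal_coe {x : EReal} (hx : 0 ≤ x) : ((erealToENNReal x : ℝ≥0∞) : EReal) = x := by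
  unfold erealToENNReal
  split_ifs with h
  · simp [h]
  · rw [EReal.coe_ennreal_ofReal, max_eq_left (EReal.toReal_nonneg hx)]
    exact EReal.coe_toReal h (fun hb => by simp [hb] at hx)

/-- For a factor map `π : (X,T) → (Y,S)` between GTDSs and an ergodic
`S`-invariant Borel probability measure `ν` on `Y`, there exists a countable compact
`K ⊆ X` with `h(T,K) = h(T,X|ν) = ∫_Y h(T,π⁻¹(y)) dν(y)`. -/
theorem exists_countable_compact_with_fiber_entropy {X Y : Type*}
    [MetricSpace X] [CompactSpace X]
    [MetricSpace Y] [CompactSpace Y] [MeasurableSpace Y] [BorelSpace Y]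
    (T : X → X) (hT : Continuous T) (S : Y → Y) (hS : Continuous S)
    (π : X → Y) (hπc : Continuous π) (hπs : Function.Surjective π)
    (hcomm : π ∘ T = S ∘ π)
    (ν : Measure Y) [IsProbabilityMeasure ν] (hν : Ergodic S ν) :
    ∃ K : Set X, K.Countable ∧ IsCompact K ∧
      subEnt T K =
        ((∫⁻ y, erealToENNReal (subEnt T (π ⁻¹' {y})) ∂ν : ℝ≥0∞) : EReal) := by
  have hfm := measurable_subEnt T hT π hπc
  have hf0 : ∀ y, 0 ≤ subEnt T (π ⁻¹' {y}) := fun y =>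
    subEnt_nonneg T (by obtain ⟨x, hx⟩ := hπs y; exact ⟨x, hx⟩)
  have hfc : ∀ y, IsCompact (π ⁻¹' {y}) := fun y => (isClosed_singleton.preimage hπc).isCompact
  have hfS : ∀ y, subEnt T (π ⁻¹' {y}) ≤ subEnt T (π ⁻¹' {S y}) := by
    intro y
    refine (subEnt_image T (hfc y)).trans (subEnt_mono T ?_)
    rintro _ ⟨x, hx, rfl⟩
    have h1 : π x = y := hx
    have h2 : π (T x) = S (π x) := congrFun hcomm x
    simp [h2, h1]
  let g : Y → ℝ≥0∞ := fun y => EReal.exp (-subEnt T (π ⁻¹' {y}))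
  have hgm : Measurable g := EReal.measurable_exp.comp hfm.neg
  have hgS : ∀ y, g (S y) ≤ g y := fun y =>
    EReal.exp_monotone (EReal.neg_le_neg_iff.2 (hfS y))
  have hg1 : ∀ y, g y ≤ 1 := by
    intro y
    rw [← EReal.exp_zero]
    exact EReal.exp_monotone (by simpa using hf0 y)
  have hint : ∫⁻ y, g (S y) ∂ν = ∫⁻ y, g y ∂ν := hν.toMeasurePreserving.lintegral_comp hgm
  have hfin : ∫⁻ y, g y ∂ν ≠ ∞ := by
    have : ∫⁻ y, g y ∂ν ≤ ∫⁻ _, 1 ∂ν := lintegral_mono hg1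
    exact ne_top_of_le_ne_top (by simp) this
  have hae : g ∘ S =ᵐ[ν] g :=
    ae_eq_of_ae_le_of_lintegral_le (.of_forall hgS) (by rw [← hint] at hfin; exact hfin)
      hgm.aemeasurable hint.ge
  obtain ⟨c, hc⟩ := hν.ae_eq_const_of_ae_eq_comp₀ hgm.nullMeasurable hae
  have hconst : ∀ᵐ y ∂ν, subEnt T (π ⁻¹' {y}) = -ENNReal.log c := by
    filter_upwards [hc] with y hy
    have hy' : EReal.exp (-subEnt T (π ⁻¹' {y})) = c := hy
    rw [← hy', EReal.log_exp, neg_neg]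
  obtain ⟨y, hy⟩ := hconst.exists
  obtain ⟨K, -, hK1, hK2, hK3⟩ := exists_countable_compact_subset T (hfc y)
    (by obtain ⟨x, hx⟩ := hπs y; exact ⟨x, hx⟩)
  refine ⟨K, hK1, hK2, ?_⟩
  have : ∫⁻ z, erealToENNReal (subEnt T (π ⁻¹' {z})) ∂ν = erealToENNReal (subEnt T (π ⁻¹' {y})) := by
    rw [lintegral_congr_ae (g := fun _ => erealToENNReal (subEnt T (π ⁻¹' {y})))]
    · simp
    · filter_upwards [hconst] with z hz
      rw [hz, hy]
  rw [hK3, this, erealToENNReal_coe (hf0 y)]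
end
end

section
/- Let (X,T) be a general topological dynamical system with T surjective, and let (X_T, S) be its natural extension. Then (X_T, S) is lowerable (respectively hereditarily lowerable, respectively HUL, respectively asymptotically h-expansive) if and only if (X,T) is lowerable (respectively hereditarily lowerable, respectively HUL, respectively asymptotically h-expansive). -/
open Filter Set Metric MeasureTheory
open scoped ENNReal Topology

noncomputable section

variable {X Y : Type*}

attribute [local instance] PiCountable.metricSpace

/-- The natural extension `X_T = {(x₁,x₂,…) : T(x_{i+1}) = x_i}` of a surjective GTDS,
as a subspace of the countable product `ℕ → X` (carrying a metric inducing the product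
topology). -/
def NatExt (T : X → X) : Type _ := {x : ℕ → X // ∀ i : ℕ, T (x (i + 1)) = x i}

instance natExtMetricSpace [MetricSpace X] (T : X → X) : MetricSpace (NatExt T) :=
  inferInstanceAs (MetricSpace {x : ℕ → X // ∀ i : ℕ, T (x (i + 1)) = x i})

/-- The shift homeomorphism `S(x₁,x₂,x₃,…) = (T(x₁),x₁,x₂,…)` on the natural extension. -/
def natExtShift (T : X → X) (x : NatExt T) : NatExt T :=
  ⟨fun n => Nat.casesOn n (T (x.1 0)) x.1, by
    intro i
    cases i with
    | zero => rfl
    | succ k => exact x.2 k⟩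


namespace NEP

lemma log_div_le {s : ℝ≥0∞} {n : ℕ} (hn : 0 < n) (c : ℝ) :
    ENNReal.log s / (n : EReal) ≤ (c : EReal) ↔ s ≤ ENNReal.ofReal (Real.exp (n * c)) := by
  have h1 : (0 : EReal) < (n : EReal) := by exact_mod_cast hn
  have h2 : (n : EReal) ≠ ⊤ := EReal.natCast_ne_top n
  rw [EReal.div_le_iff_le_mul h1 h2, ← ENNReal.log_le_log_iff (x := s), ← EReal.exp_coe,
    EReal.log_exp]
  have : ((n : ℝ) * c : ℝ) = ((n : EReal) * (c : EReal)) := by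
    rw [EReal.coe_mul, EReal.coe_natCast]
  rw [this]

lemma sepEnt_le_of [PseudoMetricSpace X] {T : X → X} {ε : ℝ} {K : Set X} {c : ℝ}
    (h : ∀ᶠ n : ℕ in atTop, sepMaxCard T n ε K ≤ ENNReal.ofReal (Real.exp (n * c))) :
    sepEnt T ε K ≤ c := by
  refine Filter.limsup_le_of_le (by isBoundedDefault) ?_
  filter_upwards [h, eventually_gt_atTop 0] with n hn hn0
  exact (log_div_le hn0 c).2 hn

lemma ev_of_sepEnt_lt [PseudoMetricSpace X] {T : X → X} {ε : ℝ} {K : Set X} {c : ℝ}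
    (h : sepEnt T ε K < c) :
    ∀ᶠ n : ℕ in atTop, sepMaxCard T n ε K ≤ ENNReal.ofReal (Real.exp (n * c)) := by
  have := Filter.eventually_lt_of_limsup_lt h
  filter_upwards [this, eventually_gt_atTop 0] with n hn hn0
  exact (log_div_le hn0 c).1 hn.le

lemma le_sepEnt_of [PseudoMetricSpace X] {T : X → X} {ε : ℝ} {K : Set X} {c : ℝ}
    (h : ∃ᶠ n : ℕ in atTop, ENNReal.ofReal (Real.exp (n * c)) < sepMaxCard T n ε K) :
    c ≤ sepEnt T ε K := by
  by_contra hlt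
  push Not at hlt
  obtain ⟨n, h1, h2⟩ := (h.and_eventually (ev_of_sepEnt_lt hlt)).exists
  exact absurd h1 (not_lt.2 h2)

lemma freq_of_lt_sepEnt [PseudoMetricSpace X] {T : X → X} {ε : ℝ} {K : Set X} {c : ℝ}
    (h : c < sepEnt T ε K) :
    ∃ᶠ n : ℕ in atTop, ENNReal.ofReal (Real.exp (n * c)) < sepMaxCard T n ε K := by
  by_contra hlt
  rw [not_frequently] at hlt
  exact absurd h (not_lt.2 (sepEnt_le_of (hlt.mono fun n hn => not_lt.1 hn)))

/-- polynomial factors are harmless -/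
lemma sepEnt_le_of_poly [PseudoMetricSpace X] {T : X → X} {ε : ℝ} {K : Set X} {c : ℝ} (M : ℕ)
    (h : ∀ᶠ n : ℕ in atTop, sepMaxCard T n ε K ≤
      ((M + n : ℕ) : ℝ≥0∞) * ENNReal.ofReal (Real.exp (n * c))) :
    sepEnt T ε K ≤ c := by
  rw [← EReal.le_of_forall_lt_iff_le]
  intro z hz
  have hz : c < z := by exact_mod_cast hz
  apply sepEnt_le_of
  have hd : 0 < z - c := sub_pos.2 hz
  have ht : Tendsto (fun n : ℕ => ((M : ℝ) + n) / Real.exp ((z - c) * n)) atTop (𝓝 0) := by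
    have h1 : Tendsto (fun x : ℝ => x ^ (1 : ℝ) * Real.exp (-(z - c) * x)) atTop (𝓝 0) :=
      tendsto_rpow_mul_exp_neg_mul_atTop_nhds_zero 1 (z - c) hd
    have h2 : Tendsto (fun x : ℝ => x ^ (0 : ℝ) * Real.exp (-(z - c) * x)) atTop (𝓝 0) :=
      tendsto_rpow_mul_exp_neg_mul_atTop_nhds_zero 0 (z - c) hd
    have h3 := ((h2.const_mul (M : ℝ)).add h1).comp tendsto_natCast_atTop_atTop (α := ℕ)
    simp only [mul_zero, add_zero] at h3
    refine h3.congr fun n => ?_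
    simp only [Function.comp, Real.rpow_zero, Real.rpow_one]
    rw [neg_mul, Real.exp_neg]
    ring
  filter_upwards [h, ht.eventually (gt_mem_nhds zero_lt_one)] with n hn hn1
  refine hn.trans ?_
  rw [← ENNReal.ofReal_natCast, ← ENNReal.ofReal_mul (by positivity)]
  apply ENNReal.ofReal_le_ofReal
  rw [div_lt_one (Real.exp_pos _)] at hn1
  have : Real.exp (n * z) = Real.exp ((z - c) * n) * Real.exp (n * c) := by
    rw [← Real.exp_add]; ring_nf
  rw [this]
  push_cast
  gcongr

section basic
variable [PseudoMetricSpace X] {T : X → X}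

lemma sMC_mono {n : ℕ} {ε : ℝ} {K K' : Set X} (h : K ⊆ K') :
    sepMaxCard T n ε K ≤ sepMaxCard T n ε K' := by
  refine iSup₂_le fun E hE => ?_
  exact le_iSup₂_of_le E ⟨hE.1.trans h, hE.2⟩ le_rfl

lemma sMC_anti {n : ℕ} {ε ε' : ℝ} {K : Set X} (h : ε ≤ ε') :
    sepMaxCard T n ε' K ≤ sepMaxCard T n ε K := by
  refine iSup₂_le fun E hE => ?_
  refine le_iSup₂_of_le E ⟨hE.1, ?_⟩ le_rfl
  intro x hx y hy hxy
  obtain ⟨i, hi, hd⟩ := hE.2 hx hy hxy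
  exact ⟨i, hi, h.trans_lt hd⟩

lemma sMC_union {n : ℕ} {ε : ℝ} {K K' : Set X} :
    sepMaxCard T n ε (K ∪ K') ≤ sepMaxCard T n ε K + sepMaxCard T n ε K' := by
  classical
  refine iSup₂_le fun E hE => ?_
  have h1 : ((E.filter (· ∈ K)).card : ℝ≥0∞) ≤ sepMaxCard T n ε K := by
    refine le_iSup₂_of_le (E.filter (· ∈ K)) ⟨fun x hx => ?_, hE.2.mono fun x hx => ?_⟩ le_rfl
    · simp at hx; exact hx.2
    · simp at hx; exact hx.1
  have h2 : ((E.filter (· ∉ K)).card : ℝ≥0∞) ≤ sepMaxCard T n ε K' := by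
    refine le_iSup₂_of_le (E.filter (· ∉ K)) ⟨fun x hx => ?_, hE.2.mono fun x hx => ?_⟩ le_rfl
    · simp at hx; exact (hE.1 hx.1).resolve_left hx.2
    · simp at hx; exact hx.1
  calc (E.card : ℝ≥0∞) = ((E.filter (· ∈ K)).card : ℝ≥0∞) + ((E.filter (· ∉ K)).card : ℝ≥0∞) := by
        rw [← Nat.cast_add, Finset.card_filter_add_card_filter_not]
    _ ≤ _ := add_le_add h1 h2

lemma sMC_finite {n : ℕ} {ε : ℝ} {K : Set X} (hK : K.Finite) :
    sepMaxCard T n ε K ≤ (hK.toFinset.card : ℝ≥0∞) := by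
  refine iSup₂_le fun E hE => ?_
  exact_mod_cast Finset.card_le_card fun x hx => by simpa using hE.1 hx

/-- a set inside one Bowen ball -/
lemma sMC_le_one {n : ℕ} {ε : ℝ} {K : Set X} 
    (h : ∀ x ∈ K, ∀ y ∈ K, ∀ i < n, dist (T^[i] x) (T^[i] y) ≤ ε) :
    sepMaxCard T n ε K ≤ 1 := by
  refine iSup₂_le fun E hE => ?_
  have : E.card ≤ 1 := by
    rw [Finset.card_le_one]
    intro a ha b hb
    by_contra hab
    obtain ⟨i, hi, hd⟩ := hE.2 ha hb hab
    exact absurd hd (not_lt.2 (h a (hE.1 ha) b (hE.1 hb) i hi))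
  exact_mod_cast this

lemma one_le_sMC {n : ℕ} {ε : ℝ} {K : Set X} (h : K.Nonempty) :
    1 ≤ sepMaxCard T n ε K := by
  obtain ⟨x, hx⟩ := h
  refine le_iSup₂_of_le {x} ⟨by simpa using hx, by simp [IsSep]⟩ (by simp)

lemma sMC_biUnion {ι : Type*} {n : ℕ} {ε : ℝ} (s : Finset ι) (K : ι → Set X) :
    sepMaxCard T n ε (⋃ i ∈ s, K i) ≤ ∑ i ∈ s, sepMaxCard T n ε (K i) := by
  classical
  induction s using Finset.induction_on with
  | empty => 
    simp only [Finset.notMem_empty, iUnion_of_empty, iUnion_empty, Finset.sum_empty]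
    have := sMC_finite (T := T) (n := n) (ε := ε) (K := (∅ : Set X)) finite_empty
    simpa using this
  | insert a s ha ih =>
    rw [Finset.set_biUnion_insert, Finset.sum_insert ha]
    exact sMC_union.trans (by gcongr)

lemma sepEnt_mono {ε : ℝ} {K K' : Set X} (h : K ⊆ K') : sepEnt T ε K ≤ sepEnt T ε K' := by
  rw [← EReal.le_of_forall_lt_iff_le]
  intro z hz
  exact sepEnt_le_of ((ev_of_sepEnt_lt hz).mono fun n hn => (sMC_mono h).trans hn)

lemma sepEnt_anti {ε ε' : ℝ} {K : Set X} (h : ε ≤ ε') : sepEnt T ε' K ≤ sepEnt T ε K := by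
  rw [← EReal.le_of_forall_lt_iff_le]
  intro z hz
  exact sepEnt_le_of ((ev_of_sepEnt_lt hz).mono fun n hn => (sMC_anti h).trans hn)

lemma sepEnt_union {ε : ℝ} {K K' : Set X} :
    sepEnt T ε (K ∪ K') ≤ max (sepEnt T ε K) (sepEnt T ε K') := by
  rw [← EReal.le_of_forall_lt_iff_le]
  intro z hz
  rw [max_lt_iff] at hz
  apply sepEnt_le_of_poly 2
  filter_upwards [ev_of_sepEnt_lt hz.1, ev_of_sepEnt_lt hz.2] with n h1 h2
  calc _ ≤ _ := sMC_union
    _ ≤ _ := add_le_add h1 h2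
    _ = ((2 : ℕ) : ℝ≥0∞) * ENNReal.ofReal (Real.exp (n * z)) := by push_cast; ring
    _ ≤ _ := by gcongr; omega

lemma sepEnt_finite {ε : ℝ} {K : Set X} (hK : K.Finite) : sepEnt T ε K ≤ 0 := by
  have : sepEnt T ε K ≤ ((0 : ℝ) : EReal) := by
    apply sepEnt_le_of_poly hK.toFinset.card
    refine Eventually.of_forall fun n => (sMC_finite hK).trans ?_
    simp
  simpa using this

lemma sepEnt_nonneg {ε : ℝ} {K : Set X} (hK : K.Nonempty) : 0 ≤ sepEnt T ε K := by
  rw [← EReal.le_of_forall_lt_iff_le]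
  intro z hz
  by_contra h0
  push Not at h0
  have h0 : z < 0 := by exact_mod_cast h0
  obtain ⟨n, h1, h2⟩ := ((ev_of_sepEnt_lt hz).and (eventually_gt_atTop 0)).exists
  have h3 := (one_le_sMC (T := T) (n := n) (ε := ε) hK).trans h1
  rw [ENNReal.one_le_ofReal, Real.one_le_exp_iff] at h3
  have : (n : ℝ) * z < 0 := mul_neg_of_pos_of_neg (by exact_mod_cast h2) h0
  linarith

lemma subEnt_mono {K K' : Set X} (h : K ⊆ K') : subEnt T K ≤ subEnt T K' :=
  iSup₂_mono fun _ _ => sepEnt_mono h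

lemma sepEnt_le_subEnt {ε : ℝ} (hε : 0 < ε) {K : Set X} : sepEnt T ε K ≤ subEnt T K :=
  le_iSup₂_of_le ε hε le_rfl

lemma subEnt_union {K K' : Set X} : subEnt T (K ∪ K') ≤ max (subEnt T K) (subEnt T K') := by
  refine iSup₂_le fun ε hε => sepEnt_union.trans ?_
  exact max_le_max (sepEnt_le_subEnt hε) (sepEnt_le_subEnt hε)

lemma subEnt_finite {K : Set X} (hK : K.Finite) : subEnt T K ≤ 0 :=
  iSup₂_le fun _ _ => sepEnt_finite hK

lemma subEnt_nonneg {K : Set X} (hK : K.Nonempty) : 0 ≤ subEnt T K :=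
  (sepEnt_nonneg hK).trans (sepEnt_le_subEnt one_pos)

lemma subEnt_empty_lt : subEnt T (∅ : Set X) ≤ 0 := subEnt_finite finite_empty

/-- the standard scales -/
def eps (k : ℕ) : ℝ := 1 / ((k : ℝ) + 2)

lemma eps_pos (k : ℕ) : 0 < eps k := by unfold eps; positivity

lemma eps_lt_one (k : ℕ) : eps k < 1 := by
  unfold eps
  rw [div_lt_one (by positivity)]
  have : (0 : ℝ) ≤ k := by positivity
  linarith

lemma eps_anti {k l : ℕ} (h : k ≤ l) : eps l ≤ eps k := by
  unfold eps
  have : (k : ℝ) ≤ l := by exact_mod_cast h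
  gcongr

lemma exists_eps_lt {ε : ℝ} (h : 0 < ε) : ∃ k, eps k < ε := by
  obtain ⟨k, hk⟩ := exists_nat_one_div_lt h
  refine ⟨k, lt_of_le_of_lt ?_ hk⟩
  unfold eps
  gcongr
  norm_num

lemma subEnt_eq {K : Set X} : subEnt T K = ⨆ k, sepEnt T (eps k) K := by
  apply le_antisymm
  · refine iSup₂_le fun ε hε => ?_
    obtain ⟨k, hk⟩ := exists_eps_lt hε
    exact le_iSup_of_le k (sepEnt_anti hk.le)
  · exact iSup_le fun k => sepEnt_le_subEnt (eps_pos k)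

end basic

/-- the comparison lemma -/
lemma sepEnt_comp [PseudoMetricSpace X] [PseudoMetricSpace Y] {T : X → X} {S : Y → Y}
    {K : Set X} {L : Set Y} {ε δ : ℝ} (hδ : 0 ≤ δ) (f : X → Y) (hf : MapsTo f K L)
    {M : ℕ} (c : X → Fin M)
    (h : ∀ n : ℕ, ∀ x ∈ K, ∀ y ∈ K, c x = c y →
      (∀ i < n, dist (S^[i] (f x)) (S^[i] (f y)) ≤ δ) →
      ∀ i < n, dist (T^[i] x) (T^[i] y) ≤ ε) :
    sepEnt T ε K ≤ sepEnt S δ L := by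
  classical
  have key : ∀ n, sepMaxCard T n ε K ≤ (M : ℝ≥0∞) * sepMaxCard S n δ L := by
    intro n
    refine iSup₂_le fun E hE => ?_
    have h1 : ∀ j : Fin M, ((E.filter (c · = j)).card : ℝ≥0∞) ≤ sepMaxCard S n δ L := by
      intro j
      have hsep : ∀ x ∈ E.filter (c · = j), ∀ y ∈ E.filter (c · = j), x ≠ y →
          ∃ i < n, δ < dist (S^[i] (f x)) (S^[i] (f y)) := by
        intro x hx y hy hxy
        by_contra hcon
        push Not at hcon
        simp only [Finset.mem_filter] at hx hy
        have h2 := h n x (hE.1 hx.1) y (hE.1 hy.1) (hx.2.trans hy.2.symm) hcon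
        obtain ⟨i, hi, hd⟩ := hE.2 hx.1 hy.1 hxy
        exact absurd hd (not_lt.2 (h2 i hi))
      have hinj : Set.InjOn f (E.filter (c · = j) : Finset X) := by
        intro x hx y hy hxy
        by_contra hne
        obtain ⟨i, hi, hd⟩ := hsep x hx y hy hne
        rw [hxy, dist_self] at hd
        exact absurd hd (not_lt.2 hδ)
      rw [← Finset.card_image_of_injOn hinj]
      refine le_iSup₂_of_le ((E.filter (c · = j)).image f) ⟨?_, ?_⟩ le_rfl
      · intro y hy
        simp only [Finset.coe_image, Set.mem_image] at hy
        obtain ⟨x, hx, rfl⟩ := hy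
        simp only [Finset.coe_filter, Set.mem_ofPred_eq] at hx
        exact hf (hE.1 hx.1)
      · intro y hy y' hy' hne
        simp only [Finset.coe_image, Set.mem_image] at hy hy'
        obtain ⟨x, hx, rfl⟩ := hy
        obtain ⟨x', hx', rfl⟩ := hy'
        exact hsep x hx x' hx' fun hxx => hne (by rw [hxx])
    have h2 : E.card = ∑ j : Fin M, (E.filter (c · = j)).card :=
      Finset.card_eq_sum_card_fiberwise fun x _ => by simp
    rw [h2, Nat.cast_sum]
    calc _ ≤ ∑ j : Fin M, sepMaxCard S n δ L := Finset.sum_le_sum fun j _ => h1 j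
      _ = _ := by simp
  rw [← EReal.le_of_forall_lt_iff_le]
  intro z hz
  apply sepEnt_le_of_poly M
  filter_upwards [ev_of_sepEnt_lt hz] with n hn
  refine (key n).trans ?_
  gcongr
  omega

end NEP


namespace NEP

/-- all but finitely many points of `I` are near `z` -/
def ConvTo [TopologicalSpace X] (I : Set X) (z : X) : Prop := ∀ U ∈ 𝓝 z, (I \ U).Finite

lemma ConvTo.mono [TopologicalSpace X] {I J : Set X} {z : X} (h : ConvTo I z) (hJ : J ⊆ I) :
    ConvTo J z := fun U hU => (h U hU).subset (sdiff_subset_sdiff_left hJ)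

lemma ConvTo.insert [TopologicalSpace X] {I : Set X} {z : X} (h : ConvTo I z) :
    ConvTo (insert z I) z := fun U hU => (h U hU).subset (by
  rintro x ⟨rfl | hx, hxU⟩
  · exact absurd (mem_of_mem_nhds hU) hxU
  · exact ⟨hx, hxU⟩)

lemma ConvTo.image [TopologicalSpace X] [TopologicalSpace Y] {I : Set X} {z : X} (h : ConvTo I z)
    {f : X → Y} (hf : Continuous f) : ConvTo (f '' I) (f z) := fun U hU => by
  have := (h _ (hf.continuousAt hU)).image f
  refine this.subset ?_
  rintro _ ⟨⟨x, hx, rfl⟩, hxU⟩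
  exact ⟨x, ⟨hx, hxU⟩, rfl⟩

lemma isCompact_of_near [TopologicalSpace X] {K : Set X} {p : X} (hp : p ∈ K)
    (h : ∀ U ∈ 𝓝 p, ∃ C ⊆ K, IsCompact C ∧ K \ U ⊆ C) : IsCompact K := by
  rw [isCompact_iff_ultrafilter_le_nhds]
  intro f hf
  by_cases hfp : (f : Filter X) ≤ 𝓝 p
  · exact ⟨p, hp, hfp⟩
  · obtain ⟨U, hU, hUf⟩ := Filter.not_le.1 hfp
    obtain ⟨C, hCK, hC, hUC⟩ := h U hU
    have h1 : K ∈ f := le_principal_iff.1 hf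
    have h2 : Uᶜ ∈ f := Ultrafilter.compl_mem_iff_notMem.2 hUf
    have h3 : C ∈ f := Filter.mem_of_superset (Filter.inter_mem h1 h2) hUC
    obtain ⟨x, hx, hfx⟩ := isCompact_iff_ultrafilter_le_nhds.1 hC f (le_principal_iff.2 h3)
    exact ⟨x, hCK hx, hfx⟩

lemma ConvTo.isCompact [TopologicalSpace X] {I : Set X} {z : X} (h : ConvTo I z) (hz : z ∈ I) :
    IsCompact I :=
  isCompact_of_near hz fun U hU => ⟨I \ U, sdiff_subset, (h U hU).isCompact, Subset.rfl⟩

lemma accPt_inter_infinite [TopologicalSpace X] [T1Space X] {A : Set X} {z : X}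
    (h : AccPt z (𝓟 A)) {U : Set X} (hU : U ∈ 𝓝 z) : (A ∩ U).Infinite := by
  have := h.nhds_inter hU
  rw [inter_comm] at this
  exact Set.Infinite.of_accPt this

lemma accPt_of_infinite [TopologicalSpace X] [T1Space X] {A : Set X} {z : X}
    (h : ∀ U ∈ 𝓝 z, (A ∩ U).Infinite) : AccPt z (𝓟 A) := by
  rw [accPt_iff_nhds]
  intro U hU
  obtain ⟨y, hy, hyz⟩ := (h U hU).exists_notMem_finite (finite_singleton z)
  exact ⟨y, ⟨hy.2, hy.1⟩, by simpa using hyz⟩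

lemma ConvTo.accPt_eq [TopologicalSpace X] [T2Space X] {I : Set X} {z x : X} (h : ConvTo I z)
    (hx : AccPt x (𝓟 I)) : x = z := by
  by_contra hne
  obtain ⟨U, V, hU, hV, hxU, hzV, hd⟩ := t2_separation hne
  refine accPt_inter_infinite hx (hU.mem_nhds hxU) ((h V (hV.mem_nhds hzV)).subset ?_)
  exact fun y hy => ⟨hy.1, fun hyV => disjoint_left.1 hd hy.2 hyV⟩

lemma ConvTo.accPt [TopologicalSpace X] [T1Space X] {I : Set X} {z : X} (h : ConvTo I z)
    (hI : I.Infinite) : AccPt z (𝓟 I) :=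
  accPt_of_infinite fun U hU => by
    have : I = (I ∩ U) ∪ (I \ U) := (inter_union_sdiff I U).symm
    rw [this, infinite_union] at hI
    exact hI.resolve_right (fun hh => hh (h U hU))

section lower
variable [PseudoMetricSpace X] {T : X → X}

/-- Extraction of a sequence converging to `z` which carries the local entropies of `A` at `z`. -/
lemma exists_convTo (A : Set X) (z : X) : ∃ I ⊆ A, ConvTo I z ∧ ∀ l : ℕ,
    (⨅ U ∈ 𝓝 z, sepEnt T (eps l) (A ∩ U)) ≤ sepEnt T (eps l) I := by
  have key : ∀ t : ℕ × ℚ × ℕ, ∃ E : Finset X, (E : Set X) ⊆ A ∩ ball z (eps (Encodable.encode t)) ∧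
      (((t.2.1 : ℝ) : EReal) < (⨅ U ∈ 𝓝 z, sepEnt T (eps t.1) (A ∩ U)) →
        ∃ n ≥ t.2.2, IsSep T n (eps t.1) (E : Set X) ∧
          ENNReal.ofReal (Real.exp (n * (t.2.1 : ℝ))) < (E.card : ℝ≥0∞)) := by
    intro t
    by_cases ht : ((t.2.1 : ℝ) : EReal) < (⨅ U ∈ 𝓝 z, sepEnt T (eps t.1) (A ∩ U))
    · have h1 := lt_of_lt_of_le ht (iInf₂_le _ (ball_mem_nhds z (eps_pos (Encodable.encode t))))
      obtain ⟨n, hn, hlt⟩ := (frequently_atTop.1 (freq_of_lt_sepEnt h1)) t.2.2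
      rw [sepMaxCard, lt_iSup_iff] at hlt
      obtain ⟨E, hlt⟩ := hlt
      rw [lt_iSup_iff] at hlt
      obtain ⟨hE, hlt⟩ := hlt
      exact ⟨E, hE.1, fun _ => ⟨n, hn, hE.2, hlt⟩⟩
    · exact ⟨∅, by simp, fun h => absurd h ht⟩
  choose E hE hE2 using key
  refine ⟨⋃ t, (E t : Set X), iUnion_subset fun t => (hE t).trans inter_subset_left, ?_, ?_⟩
  · intro U hU
    obtain ⟨r, hr, hrU⟩ := Metric.mem_nhds_iff.1 hU
    obtain ⟨k, hk⟩ := exists_eps_lt hr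
    have hfin : {t : ℕ × ℚ × ℕ | Encodable.encode t < k}.Finite :=
      (Set.finite_lt_nat k).preimage Encodable.encode_injective.injOn
    refine (hfin.biUnion fun t _ => (E t).finite_toSet).subset ?_
    rintro x ⟨hx, hxU⟩
    obtain ⟨t, ht⟩ := mem_iUnion.1 hx
    refine mem_iUnion₂.2 ⟨t, ?_, ht⟩
    by_contra hcon
    have h2 : k ≤ Encodable.encode t := not_lt.1 hcon
    exact hxU (hrU (ball_subset_ball ((eps_anti h2).trans hk.le) (hE t ht).2))
  · intro l
    refine le_of_forall_lt fun b hb => ?_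
    obtain ⟨b', hbb', hb'⟩ := exists_between hb
    obtain ⟨q, hq1, hq2⟩ := EReal.exists_rat_btwn_of_lt hb'
    refine (hbb'.trans hq1).trans_le ?_
    apply le_sepEnt_of
    rw [frequently_atTop]
    intro k
    obtain ⟨n, hn, hs, hc⟩ := hE2 (l, q, k) hq2
    refine ⟨n, hn, hc.trans_le ?_⟩
    exact le_iSup₂_of_le (E (l, q, k)) ⟨subset_iUnion (fun t => (E t : Set X)) _, hs⟩ le_rfl

end lower

lemma bowen_nhds [PseudoMetricSpace X] {T : X → X} (hT : Continuous T) (p : X) (n : ℕ) {ε : ℝ}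
    (hε : 0 < ε) : {x | ∀ i < n, dist (T^[i] x) (T^[i] p) < ε} ∈ 𝓝 p := by
  have : ∀ i ∈ Finset.range n, ∀ᶠ x in 𝓝 p, dist (T^[i] x) (T^[i] p) < ε := by
    intro i _
    exact (hT.iterate i).continuousAt.eventually (ball_mem_nhds _ hε)
  have := (Filter.eventually_all_finset (Finset.range n)).2 this
  filter_upwards [this] with x hx i hi using hx i (Finset.mem_range.2 hi)

lemma subEnt_inter_nhds [PseudoMetricSpace X] {T : X → X} {B V : Set X} {q : X} (h : ConvTo B q)
    (hV : V ∈ 𝓝 q) : subEnt T B ≤ max (subEnt T (B ∩ V)) 0 := by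
  conv_lhs => rw [← inter_union_sdiff B V]
  exact subEnt_union.trans (max_le_max le_rfl (subEnt_finite (h V hV)))

lemma subEnt_insert [PseudoMetricSpace X] {T : X → X} {B : Set X} {q : X} :
    subEnt T (insert q B) ≤ max (subEnt T B) 0 := by
  rw [insert_eq, union_comm]
  exact subEnt_union.trans (max_le_max le_rfl (subEnt_finite (finite_singleton q)))

/-- The contradiction with HUL. -/
lemma not_HUL_of [MetricSpace X] [CompactSpace X] {T : X → X} (hT : Continuous T)
    (hH : HUL T) {c : ℝ} {h : EReal} (hc0 : 0 < c) (hch : c < h)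
    (hyp : ∀ (b : EReal) (k : ℕ) (F : Set X), b < h → F.Finite → ∃ (q : X) (B : Set X), q ∉ F ∧
      ConvTo B q ∧ b < subEnt T B ∧ subEnt T B < h ∧ sepEnt T (eps k) B < c) : False := by
  have hh0 : 0 < h := lt_trans (by exact_mod_cast hc0) hch
  -- the point `p`
  obtain ⟨p, hp⟩ : ∃ p : X, ∀ G ∈ 𝓝 p, ∀ (b : EReal) (k : ℕ) (F : Set X), b < h → F.Finite →
      ∃ (q : X) (B : Set X), q ∈ G ∧ q ∉ F ∧
      ConvTo B q ∧ b < subEnt T B ∧ subEnt T B < h ∧ sepEnt T (eps k) B < c := by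
    by_contra hcon
    push Not at hcon
    have := isCompact_univ.induction_on (X := X) (p := fun s => ∃ (b : EReal) (k : ℕ) (F : Set X),
      b < h ∧ F.Finite ∧ ∀ (q : X) (B : Set X), q ∈ s → q ∉ F → ConvTo B q → b < subEnt T B →
        subEnt T B < h → ¬ sepEnt T (eps k) B < c) ?_ ?_ ?_ ?_
    · obtain ⟨b, k, F, hb, hF, hall⟩ := this
      obtain ⟨q, B, h1, h2, h3, h4, h5⟩ := hyp b k F hb hF
      exact hall q B (mem_univ _) h1 h2 h3 h4 h5
    · exact ⟨0, 0, ∅, hh0, finite_empty, by simp⟩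
    · rintro s t hst ⟨b, k, F, hb, hF, hall⟩
      exact ⟨b, k, F, hb, hF, fun q B hq => hall q B (hst hq)⟩
    · rintro s t ⟨b, k, F, hb, hF, hall⟩ ⟨b', k', F', hb', hF', hall'⟩
      refine ⟨max b b', max k k', F ∪ F', max_lt hb hb', hF.union hF', ?_⟩
      rintro q B (hq | hq) hqF hB hbB hBh hcc
      · exact hall q B hq (fun hh => hqF (Or.inl hh)) hB ((le_max_left _ _).trans_lt hbB) hBh
          ((sepEnt_anti (eps_anti (le_max_left _ _))).trans_lt hcc)
      · exact hall' q B hq (fun hh => hqF (Or.inr hh)) hB ((le_max_right _ _).trans_lt hbB) hBh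
          ((sepEnt_anti (eps_anti (le_max_right _ _))).trans_lt hcc)
    · intro x _
      obtain ⟨G, hG, b, k, F, hb, hF, hall⟩ := hcon x
      refine ⟨G, mem_nhdsWithin_of_mem_nhds hG, b, k, F, hb, hF, fun q B h1 h2 h3 h4 h5 => ?_⟩
      exact not_lt.2 (hall q B h1 h2 h3 h4 h5)
  -- improved pieces
  have step : ∀ (b : EReal) (k : ℕ) (F : Set X), b < h → F.Finite → ∃ (q : X) (B : Set X),
      q ∉ F ∧ q ∈ B ∧ ConvTo B q ∧ b < subEnt T B ∧ subEnt T B < h ∧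
      (∀ n, sepMaxCard T n (eps k) B ≤ ENNReal.ofReal (Real.exp (n * c))) ∧
      B ⊆ {x | ∀ i < k + 1, dist (T^[i] x) (T^[i] p) < eps k} := by
    intro b k F hb hF
    set G := {x | ∀ i < k + 1, dist (T^[i] x) (T^[i] p) < eps k} with hGdef
    have hG : G ∈ 𝓝 p := bowen_nhds hT p _ (eps_pos k)
    obtain ⟨q, B, hqG, hqF, hBq, hbB, hBh, hBc⟩ := hp (interior G) (interior_mem_nhds.2 hG)
      (max b 0) k F (max_lt hb hh0) hF
    have hGq : G ∈ 𝓝 q := mem_interior_iff_mem_nhds.1 hqG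
    -- insert q
    have hBc' : sepEnt T (eps k) (insert q B) < c := by
      rw [insert_eq, union_comm]
      refine sepEnt_union.trans_lt (max_lt hBc ?_)
      exact (sepEnt_finite (finite_singleton q)).trans_lt (by exact_mod_cast hc0)
    obtain ⟨n0, hn0⟩ := eventually_atTop.1 (ev_of_sepEnt_lt hBc')
    set V := {x | ∀ i < n0, dist (T^[i] x) (T^[i] q) < eps k / 2} with hV
    have hVq : V ∈ 𝓝 q := bowen_nhds hT q _ (half_pos (eps_pos k))
    have hGV : G ∩ V ∈ 𝓝 q := Filter.inter_mem hGq hVq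
    refine ⟨q, insert q B ∩ (G ∩ V), hqF, ⟨mem_insert _ _, mem_of_mem_nhds hGV⟩,
      hBq.insert.mono inter_subset_left, ?_, ?_, ?_, ?_⟩
    · have h1 := subEnt_inter_nhds (T := T) hBq.insert hGV
      have h2 : max b 0 < subEnt T (insert q B) := hbB.trans_le (subEnt_mono (subset_insert _ _))
      have h3 := h2.trans_le h1
      rcases lt_max_iff.1 h3 with h4 | h4
      · exact (le_max_left _ _).trans_lt h4
      · exact absurd h4 (not_lt.2 (le_max_right _ _))
    · exact (subEnt_mono inter_subset_left).trans_lt (subEnt_insert.trans_lt (max_lt hBh hh0))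
    · intro n
      rcases le_or_gt n0 n with hn | hn
      · exact (sMC_mono inter_subset_left).trans (hn0 n hn)
      · refine (sMC_le_one ?_).trans ?_
        · rintro x ⟨_, _, hx⟩ y ⟨_, _, hy⟩ i hi
          have h1 := hx i (hi.trans hn)
          have h2 := hy i (hi.trans hn)
          have := dist_triangle_right (T^[i] x) (T^[i] y) (T^[i] q)
          linarith
        · rw [ENNReal.one_le_ofReal, Real.one_le_exp_iff]
          positivity
    · rintro x ⟨_, hx, _⟩
      exact hx
  -- the sequence
  obtain ⟨b, -, hbmem, hbt⟩ := exists_seq_strictMono_tendsto' hh0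
  obtain ⟨f, hfP, hfr⟩ := exists_seq_of_forall_finset_exists (α := ℕ × X × Set X)
    (P := fun t => t.2.1 ∈ t.2.2 ∧ ConvTo t.2.2 t.2.1 ∧ b t.1 < subEnt T t.2.2 ∧
      subEnt T t.2.2 < h ∧
      (∀ n, sepMaxCard T n (eps t.1) t.2.2 ≤ ENNReal.ofReal (Real.exp (n * c))) ∧
      t.2.2 ⊆ {x | ∀ i < t.1 + 1, dist (T^[i] x) (T^[i] p) < eps t.1})
    (r := fun s t => s.1 < t.1 ∧ s.2.1 ≠ t.2.1) (by
      intro s _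
      obtain ⟨k, hk⟩ : ∃ k, ∀ x ∈ s, x.1 < k :=
        ⟨s.sup (fun x => x.1) + 1, fun x hx => Nat.lt_succ_of_le (Finset.le_sup (f := fun x => x.1) hx)⟩
      obtain ⟨q, B, h1, h2⟩ := step (b k) k ((fun x : ℕ × X × Set X => x.2.1) '' (s : Set _))
        (hbmem k).2 (s.finite_toSet.image _)
      exact ⟨(k, q, B), h2, fun x hx => ⟨hk x hx, fun he => h1 ⟨x, hx, he⟩⟩⟩)
  set κ : ℕ → ℕ := fun n => (f n).1 with hκ
  set q : ℕ → X := fun n => (f n).2.1 with hq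
  set B : ℕ → Set X := fun n => (f n).2.2 with hB
  have hκmono : StrictMono κ := fun m n hmn => (hfr m n hmn).1
  have hκid : ∀ n, n ≤ κ n := hκmono.id_le
  have hqB : ∀ n, q n ∈ B n := fun n => (hfP n).1
  have hconv : ∀ n, ConvTo (B n) (q n) := fun n => (hfP n).2.1
  have hbB : ∀ n, b (κ n) < subEnt T (B n) := fun n => (hfP n).2.2.1
  have hBh : ∀ n, subEnt T (B n) < h := fun n => (hfP n).2.2.2.1
  have hBs : ∀ j n, sepMaxCard T n (eps (κ j)) (B j) ≤ ENNReal.ofReal (Real.exp (n * c)) :=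
    fun n => (hfP n).2.2.2.2.1
  have hBG : ∀ n, ∀ x ∈ B n, ∀ i < κ n + 1, dist (T^[i] x) (T^[i] p) < eps (κ n) :=
    fun n => (hfP n).2.2.2.2.2
  have hqinj : Function.Injective q := by
    intro m n hmn
    rcases lt_trichotomy m n with h1 | h1 | h1
    · exact absurd hmn (hfr m n h1).2
    · exact h1
    · exact absurd hmn.symm (hfr n m h1).2
  -- the compact set
  set Ks : Set X := insert p (⋃ n, B n) with hKs
  have hBcomp : ∀ n, IsCompact (B n) := fun n => (hconv n).isCompact (hqB n)
  have hKcomp : IsCompact Ks := by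
    refine isCompact_of_near (p := p) (mem_insert _ _) fun U hU => ?_
    obtain ⟨r, hr, hrU⟩ := Metric.mem_nhds_iff.1 hU
    obtain ⟨k, hk⟩ := exists_eps_lt hr
    refine ⟨⋃ n ∈ Finset.range k, B n, ?_, (Finset.range k).isCompact_biUnion fun n _ => hBcomp n, ?_⟩
    · refine iUnion₂_subset fun n _ => ?_
      exact (subset_iUnion B n).trans (subset_insert _ _)
    · rintro x ⟨rfl | hx, hxU⟩
      · exact absurd (mem_of_mem_nhds hU) hxU
      · obtain ⟨n, hn⟩ := mem_iUnion.1 hx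
        refine mem_iUnion₂.2 ⟨n, ?_, hn⟩
        by_contra hcon
        rw [Finset.mem_range, not_lt] at hcon
        have h1 := hBG n x hn 0 (Nat.succ_pos _)
        simp only [Function.iterate_zero, id] at h1
        exact hxU (hrU (h1.trans_le ((eps_anti (hcon.trans (hκid n))).trans hk.le)))
  have hKent : h ≤ subEnt T Ks := by
    refine le_of_tendsto' (hbt.comp hκmono.tendsto_atTop) fun n => ?_
    exact (hbB n).le.trans (subEnt_mono ((subset_iUnion B n).trans (subset_insert _ _)))
  obtain ⟨K', hK'K, -, -, hK'h, hacc⟩ := hH Ks ⟨p, mem_insert _ _⟩ hKcomp h hh0.le hKent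
  -- at most one infinite piece
  have hone : ∃ n0, ∀ n, n ≠ n0 → (K' ∩ B n).Finite := by
    by_contra hcon
    push Not at hcon
    have hA : ∀ n, ¬ (K' ∩ B n).Finite → AccPt (q n) (𝓟 K') := fun n hn =>
      (((hconv n).mono inter_subset_right).accPt hn).mono (principal_mono.2 inter_subset_left)
    obtain ⟨n1, -, h1⟩ := hcon 0
    obtain ⟨n2, h12, h2⟩ := hcon n1
    exact h12 (hqinj (hacc (hA n2 h2) (hA n1 h1)))
  obtain ⟨n0, hn0⟩ := hone
  set K2 := K' \ B n0 with hK2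
  have hK2fin : ∀ n, (K2 ∩ B n).Finite := by
    intro n
    by_cases hn : n = n0
    · have : K2 ∩ B n = ∅ := by
        ext x; simp only [hK2, hn, mem_inter_iff, Set.mem_sdiff, mem_empty_iff_false]; tauto
      rw [this]; exact finite_empty
    · exact (hn0 n hn).subset (inter_subset_inter_left _ sdiff_subset)
  have hK2ent : subEnt T K2 ≤ c := by
    refine iSup₂_le fun ε hε => ?_
    obtain ⟨J, hJ⟩ := exists_eps_lt (half_pos hε)
    -- three parts
    have hfinJ : (⋃ j ∈ Finset.range J, K2 ∩ B j).Finite :=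
      (Finset.range J).finite_toSet.biUnion fun j _ => hK2fin j
    apply sepEnt_le_of_poly (hfinJ.toFinset.card + 1)
    filter_upwards with n
    have hcov : K2 ⊆ (⋃ j ∈ Finset.range J, K2 ∩ B j) ∪ ((⋃ j ∈ Finset.Ico J n, B j) ∪
        insert p (⋃ j ∈ {j | J ≤ j ∧ n ≤ j}, B j)) := by
      intro x hx
      rcases hK'K hx.1 with rfl | hxB
      · exact Or.inr (Or.inr (mem_insert _ _))
      · obtain ⟨j, hj⟩ := mem_iUnion.1 hxB
        rcases lt_or_ge j J with h1 | h1
        · exact Or.inl (mem_iUnion₂.2 ⟨j, Finset.mem_range.2 h1, hx, hj⟩)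
        · rcases lt_or_ge j n with h2 | h2
          · exact Or.inr (Or.inl (mem_iUnion₂.2 ⟨j, Finset.mem_Ico.2 ⟨h1, h2⟩, hj⟩))
          · exact Or.inr (Or.inr (mem_insert_of_mem _ (mem_iUnion₂.2 ⟨j, ⟨h1, h2⟩, hj⟩)))
    have e1 : (1 : ℝ≥0∞) ≤ ENNReal.ofReal (Real.exp (n * c)) := by
      rw [ENNReal.one_le_ofReal, Real.one_le_exp_iff]
      positivity
    have p2 : sepMaxCard T n ε (⋃ j ∈ Finset.Ico J n, B j) ≤
        (n : ℝ≥0∞) * ENNReal.ofReal (Real.exp (n * c)) := by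
      refine (sMC_biUnion _ _).trans ?_
      calc _ ≤ ∑ j ∈ Finset.Ico J n, ENNReal.ofReal (Real.exp (n * c)) := by
            refine Finset.sum_le_sum fun j hj => ?_
            refine (sMC_anti ?_).trans (hBs j n)
            have h1 := eps_anti ((Finset.mem_Ico.1 hj).1.trans (hκid j))
            linarith
        _ = ((n - J : ℕ) : ℝ≥0∞) * ENNReal.ofReal (Real.exp (n * c)) := by simp
        _ ≤ _ := by gcongr; omega
    have p3 : sepMaxCard T n ε (insert p (⋃ j ∈ {j | J ≤ j ∧ n ≤ j}, B j)) ≤ 1 := by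
      have hx : ∀ x ∈ insert p (⋃ j ∈ {j | J ≤ j ∧ n ≤ j}, B j), ∀ i < n,
          dist (T^[i] x) (T^[i] p) ≤ ε / 2 := by
        rintro x (rfl | hx) i hi
        · rw [dist_self]; exact (half_pos hε).le
        · obtain ⟨j, ⟨hj1, hj2⟩, hxj⟩ := mem_iUnion₂.1 hx
          have h1 := hBG j x hxj i (by have := hκid j; omega)
          have h2 := eps_anti (hj1.trans (hκid j))
          linarith
      refine sMC_le_one fun x hxx y hyy i hi => ?_
      have h1 := hx x hxx i hi
      have h2 := hx y hyy i hi
      have := dist_triangle_right (T^[i] x) (T^[i] y) (T^[i] p)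
      linarith
    calc sepMaxCard T n ε K2 ≤ _ := sMC_mono hcov
      _ ≤ _ := sMC_union
      _ ≤ _ := add_le_add (sMC_finite hfinJ) sMC_union
      _ ≤ (hfinJ.toFinset.card : ℝ≥0∞) * ENNReal.ofReal (Real.exp (n * c)) + 
          ((n : ℝ≥0∞) * ENNReal.ofReal (Real.exp (n * c)) + 1 * ENNReal.ofReal (Real.exp (n * c))) := by
          refine add_le_add (le_mul_of_one_le_right' e1) (add_le_add p2 (p3.trans ?_))
          rw [one_mul]; exact e1
      _ = _ := by push_cast; ring
  have hfinal : subEnt T K' < h := by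
    have : K' ⊆ B n0 ∪ K2 := fun x hx => by
      by_cases hxB : x ∈ B n0
      · exact Or.inl hxB
      · exact Or.inr ⟨hx, hxB⟩
    exact (subEnt_mono this).trans_lt (subEnt_union.trans_lt (max_lt (hBh n0) (hK2ent.trans_lt hch)))
  exact hfinal.ne hK'h

end NEP


namespace NEP

/-- finite classes on which finitely many continuous functions are almost constant -/
lemma exists_classes [TopologicalSpace Y] [CompactSpace Y] [PseudoMetricSpace X]
    (g : ℕ → Y → X) (hg : ∀ i, Continuous (g i)) (N : ℕ) {ε : ℝ} (hε : 0 < ε) :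
    ∃ (M : ℕ) (c : Y → Fin M), ∀ x y, c x = c y → ∀ i < N, dist (g i x) (g i y) ≤ ε := by
  let V : Y → Set Y := fun z => {x | ∀ i < N, dist (g i x) (g i z) < ε / 2}
  have hV : ∀ z, V z ∈ 𝓝 z := by
    intro z
    have : ∀ i ∈ Finset.range N, ∀ᶠ x in 𝓝 z, dist (g i x) (g i z) < ε / 2 := fun i _ =>
      (hg i).continuousAt.eventually (ball_mem_nhds _ (half_pos hε))
    have := (Filter.eventually_all_finset (Finset.range N)).2 this
    filter_upwards [this] with x hx i hi using hx i (Finset.mem_range.2 hi)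
  obtain ⟨t, -, ht⟩ := isCompact_univ.elim_nhds_subcover V fun z _ => hV z
  have h1 : ∀ x : Y, ∃ z : t, x ∈ V z := by
    intro x
    obtain ⟨z, hz, hx⟩ := mem_iUnion₂.1 (ht (mem_univ x))
    exact ⟨⟨z, hz⟩, hx⟩
  choose c hc using h1
  refine ⟨t.card, fun x => t.equivFin (c x), fun x y hxy i hi => ?_⟩
  have hxy : c x = c y := t.equivFin.injective hxy
  have h1 := hc x i hi
  have h2 := hc y i hi
  rw [hxy] at h1
  have := dist_triangle_right (g i x) (g i y) (g i (c y))
  linarith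

section natext
variable [MetricSpace X] {T : X → X}

/-- coordinates -/
def cd (T : X → X) (m : ℕ) (x : NatExt T) : X := x.1 m

lemma continuous_val : Continuous (fun x : NatExt T => x.1) :=
  continuous_subtype_val (X := ℕ → X) (p := fun x => ∀ i : ℕ, T (x (i + 1)) = x i)

lemma continuous_cd (m : ℕ) : Continuous (cd T m) :=
  (continuous_apply m).comp continuous_val

lemma compact_natExt [CompactSpace X] (hT : Continuous T) : CompactSpace (NatExt T) := by
  have hcl : IsClosed {x : ℕ → X | ∀ i : ℕ, T (x (i + 1)) = x i} := by
    rw [setOf_forall]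
    exact isClosed_iInter fun i =>
      isClosed_eq (hT.comp (continuous_apply (i + 1))) (continuous_apply i)
  exact isCompact_iff_compactSpace.1 hcl.isCompact

lemma cd_shift (x : NatExt T) (j : ℕ) : cd T j (natExtShift T x) = T (cd T j x) := by
  cases j with
  | zero => rfl
  | succ k => exact (x.2 k).symm

lemma cd_iter (x : NatExt T) (i j : ℕ) : cd T j ((natExtShift T)^[i] x) = T^[i] (cd T j x) := by
  induction i with
  | zero => rfl
  | succ i ih => rw [Function.iterate_succ_apply', cd_shift, ih, Function.iterate_succ_apply']

lemma iter_cd (x : NatExt T) (i j : ℕ) : T^[i] (cd T (j + i) x) = cd T j x := by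
  induction i with
  | zero => rfl
  | succ i ih =>
    rw [Function.iterate_succ_apply]
    have : T (cd T (j + (i + 1)) x) = cd T (j + i) x := x.2 (j + i)
    rw [this, ih]

lemma continuous_shift (hT : Continuous T) : Continuous (natExtShift T) := by
  refine Continuous.subtype_mk (f := fun x : NatExt T => (natExtShift T x).1) ?_ _
  refine continuous_pi fun j => ?_
  have : (fun x : NatExt T => (natExtShift T x).1 j) = fun x => T (cd T j x) := by
    funext x
    exact cd_shift x j
  rw [this]
  exact hT.comp (continuous_cd j)

lemma dist_cd_zero_le {u v : NatExt T} (h : dist u v < 1) :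
    dist (cd T 0 u) (cd T 0 v) ≤ dist u v := by
  have := PiCountable.dist_le_dist_pi_of_dist_lt (F := fun _ : ℕ => X) (x := u.1) (y := v.1) (i := 0)
    (by have h' : dist u.1 v.1 < 1 := h; simpa using h')
  exact this

lemma surj_cd_zero (hsurj : Function.Surjective T) : Function.Surjective (cd T 0) := by
  intro x
  choose g hg using hsurj
  refine ⟨⟨fun n => g^[n] x, fun i => ?_⟩, rfl⟩
  change T (g^[i + 1] x) = g^[i] x
  rw [Function.iterate_succ_apply', hg]

lemma natExt_ext {u v : NatExt T} (h : ∀ m, cd T m u = cd T m v) : u = v :=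
  Subtype.ext (funext h)

lemma raise [CompactSpace X] (hT : Continuous T) {N N' : ℕ} (hN : N ≤ N') {δ : ℝ} (hδ : 0 < δ) :
    ∃ δ' > 0, ∀ u v : NatExt T, dist (cd T N' u) (cd T N' v) ≤ δ' →
      dist (cd T N u) (cd T N v) ≤ δ := by
  have huc := CompactSpace.uniformContinuous_of_continuous (hT.iterate (N' - N))
  obtain ⟨δ', hδ', hd⟩ := Metric.uniformContinuous_iff.1 huc δ hδ
  refine ⟨δ' / 2, half_pos hδ', fun u v huv => ?_⟩
  have := hd (a := cd T N' u) (b := cd T N' v) (by linarith)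
  have e : ∀ w : NatExt T, T^[N' - N] (cd T N' w) = cd T N w := by
    intro w
    conv_lhs => rw [show N' = N + (N' - N) by omega]
    rw [show N + (N' - N) - N = N' - N by omega]
    exact iter_cd w _ _
  rw [e, e] at this
  exact this.le

lemma exists_coord [CompactSpace X] (hT : Continuous T) (m : ℕ) {ε : ℝ} (hε : 0 < ε) :
    ∃ N ≥ m, ∃ δ > 0, ∀ u v : NatExt T, dist (cd T N u) (cd T N v) ≤ δ → dist u v ≤ ε := by
  haveI := compact_natExt hT
  have hcl : IsClosed {w : NatExt T × NatExt T | ε ≤ dist w.1 w.2} :=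
    isClosed_le continuous_const continuous_dist
  have := hcl.isCompact.induction_on (p := fun s => ∃ N ≥ m, ∃ δ > 0, ∀ w ∈ s,
    δ < dist (cd T N w.1) (cd T N w.2)) ?_ ?_ ?_ ?_
  · obtain ⟨N, hN, δ, hδ, h⟩ := this
    refine ⟨N, hN, δ, hδ, fun u v huv => ?_⟩
    by_contra hcon
    exact absurd (h (u, v) (not_le.1 hcon).le) (not_lt.2 huv)
  · exact ⟨m, le_rfl, 1, one_pos, by simp⟩
  · rintro s t hst ⟨N, hN, δ, hδ, h⟩
    exact ⟨N, hN, δ, hδ, fun w hw => h w (hst hw)⟩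
  · rintro s t ⟨N, hN, δ, hδ, h⟩ ⟨N', hN', δ', hδ', h'⟩
    obtain ⟨d1, hd1, h1⟩ := raise hT (le_max_left N N') hδ
    obtain ⟨d2, hd2, h2⟩ := raise hT (le_max_right N N') hδ'
    refine ⟨max N N', hN.trans (le_max_left _ _), min d1 d2, lt_min hd1 hd2, ?_⟩
    rintro w (hw | hw)
    · by_contra hcon
      exact absurd (h w hw) (not_lt.2 (h1 _ _ ((not_lt.1 hcon).trans (min_le_left _ _))))
    · by_contra hcon
      exact absurd (h' w hw) (not_lt.2 (h2 _ _ ((not_lt.1 hcon).trans (min_le_right _ _))))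
  · rintro ⟨u, v⟩ huv
    have hne : u ≠ v := by
      rintro rfl
      have h1 : ε ≤ dist u u := huv
      rw [dist_self] at h1
      linarith
    obtain ⟨N0, hN0⟩ : ∃ N, cd T N u ≠ cd T N v := by
      by_contra hcon
      push Not at hcon
      exact hne (natExt_ext hcon)
    have hN : cd T (N0 + m) u ≠ cd T (N0 + m) v := by
      intro he
      apply hN0
      rw [← iter_cd u m N0, ← iter_cd v m N0, he]
    have hd := dist_pos.2 hN
    refine ⟨{w | dist (cd T (N0 + m) u) (cd T (N0 + m) v) / 2 <
      dist (cd T (N0 + m) w.1) (cd T (N0 + m) w.2)}, mem_nhdsWithin_of_mem_nhds ?_,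
      N0 + m, by omega, _, half_pos hd, fun w hw => hw⟩
    have hop : IsOpen {w : NatExt T × NatExt T | dist (cd T (N0 + m) u) (cd T (N0 + m) v) / 2 <
      dist (cd T (N0 + m) w.1) (cd T (N0 + m) w.2)} :=
      isOpen_lt continuous_const (((continuous_cd _).comp continuous_fst).dist
        ((continuous_cd _).comp continuous_snd))
    exact hop.mem_nhds (half_lt_self hd)

lemma classes_up [CompactSpace X] (hT : Continuous T) (m : ℕ) {ε : ℝ} (hε : 0 < ε) :
    ∃ δ > 0, ∃ (M : ℕ) (c : NatExt T → Fin M), ∀ n : ℕ, ∀ x y, c x = c y →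
      (∀ i < n, dist (T^[i] (cd T m x)) (T^[i] (cd T m y)) ≤ δ) →
      ∀ i < n, dist ((natExtShift T)^[i] x) ((natExtShift T)^[i] y) ≤ ε := by
  haveI := compact_natExt hT
  obtain ⟨N, hN, δ, hδ, h⟩ := exists_coord hT m hε
  obtain ⟨M, c, hc⟩ := exists_classes (fun i => (natExtShift T)^[i])
    (fun i => (continuous_shift hT).iterate i) N hε
  refine ⟨δ, hδ, M, c, fun n x y hxy hd i hi => ?_⟩
  rcases lt_or_ge i (N - m) with h1 | h1
  · exact hc x y hxy i (by omega)
  · apply h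
    rw [cd_iter, cd_iter]
    have e : ∀ w : NatExt T, T^[i] (cd T N w) = T^[i - (N - m)] (cd T m w) := by
      intro w
      rw [← iter_cd w (N - m) m, ← Function.iterate_add_apply]
      congr 2 <;> omega
    rw [e, e]
    exact hd _ (by omega)

lemma sepEnt_up [CompactSpace X] (hT : Continuous T) (m : ℕ) {ε : ℝ} (hε : 0 < ε) :
    ∃ δ > 0, ∀ I : Set (NatExt T), sepEnt (natExtShift T) ε I ≤ sepEnt T δ (cd T m '' I) := by
  obtain ⟨δ, hδ, M, c, h⟩ := classes_up hT m hε
  exact ⟨δ, hδ, fun I => sepEnt_comp hδ.le (cd T m) (mapsTo_image _ _) c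
    fun n x _ y _ => h n x y⟩

lemma sepEnt_down [CompactSpace X] (hT : Continuous T) (m : ℕ) {ε : ℝ} (hε : 0 < ε) (hε1 : ε < 1)
    (I : Set (NatExt T)) : sepEnt T ε (cd T m '' I) ≤ sepEnt (natExtShift T) ε I := by
  haveI := compact_natExt hT
  rcases I.eq_empty_or_nonempty with rfl | ⟨x0, hx0⟩
  · rw [image_empty]
    rw [← EReal.le_of_forall_lt_iff_le]
    intro z hz
    apply sepEnt_le_of
    filter_upwards with n
    refine (sMC_finite finite_empty).trans ?_
    simp
  have hs : ∀ x : X, ∃ y ∈ I, x ∈ cd T m '' I → cd T m y = x := by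
    intro x
    by_cases hx : x ∈ cd T m '' I
    · obtain ⟨y, hy, rfl⟩ := hx
      exact ⟨y, hy, fun _ => rfl⟩
    · exact ⟨x0, hx0, fun h => absurd h hx⟩
  choose s hsI hs using hs
  obtain ⟨M, c, hc⟩ := exists_classes (fun i x => T^[i] (cd T m x))
    (fun i => (hT.iterate i).comp (continuous_cd m)) m hε
  refine sepEnt_comp hε.le s (fun x _ => hsI x) (fun x => c (s x)) fun n x hx y hy hxy hd i hi => ?_
  rcases lt_or_ge i m with h1 | h1
  · have := hc _ _ hxy i h1
    simp only [hs x hx, hs y hy] at this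
    exact this
  · have h2 := hd (i - m) (by omega)
    have h3 := (dist_cd_zero_le (h2.trans_lt hε1)).trans h2
    rw [cd_iter, cd_iter] at h3
    have e : ∀ w : NatExt T, T^[i] (cd T m w) = T^[i - m] (cd T 0 w) := by
      intro w
      have := iter_cd w m 0
      rw [zero_add] at this
      rw [← this, ← Function.iterate_add_apply]
      congr 2; omega
    rw [← e, ← e, hs x hx, hs y hy] at h3
    exact h3

lemma subEnt_cd [CompactSpace X] (hT : Continuous T) (m : ℕ) (I : Set (NatExt T)) :
    subEnt T (cd T m '' I) = subEnt (natExtShift T) I := by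
  apply le_antisymm
  · rw [subEnt_eq]
    exact iSup_le fun k => (sepEnt_down hT m (eps_pos k) (eps_lt_one k) I).trans
      (sepEnt_le_subEnt (eps_pos k))
  · refine iSup₂_le fun ε hε => ?_
    obtain ⟨δ, hδ, h⟩ := sepEnt_up (T := T) hT m hε
    exact (h I).trans (sepEnt_le_subEnt hδ)

/-- two different points of one fibre cannot both live in a finite set -/
lemma fibre_unique {F : Set X} (hF : F.Finite) {u v : NatExt T} (h0 : cd T 0 u = cd T 0 v)
    (hu : ∀ m, cd T m u ∈ F) (hv : ∀ m, cd T m v ∈ F) : u = v := by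
  have per : ∀ w : NatExt T, (∀ m, cd T m w ∈ F) → ∀ j, cd T j w ∈ Function.periodicPts T := by
    intro w hw j
    -- pigeonhole on the coordinates `≥ j`
    have : ¬ Function.Injective (fun i : ℕ => cd T (j + i) w) := by
      intro hinj
      have := Set.infinite_range_of_injective hinj
      exact this (hF.subset (by rintro _ ⟨i, rfl⟩; exact hw _))
    obtain ⟨a, b, hab, hne⟩ : ∃ a b, cd T (j + a) w = cd T (j + b) w ∧ a < b := by
      rw [Function.Injective] at this
      push Not at this
      obtain ⟨a, b, h1, h2⟩ := this
      rcases lt_or_gt_of_ne h2 with h3 | h3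
      · exact ⟨a, b, h1, h3⟩
      · exact ⟨b, a, h1.symm, h3⟩
    have h1 : T^[b - a] (cd T (j + a) w) = cd T (j + a) w := by
      conv_lhs => rw [hab, show j + b = j + a + (b - a) by omega]
      exact iter_cd w _ _
    refine ⟨b - a, by omega, ?_⟩
    rw [← iter_cd w a j]
    change T^[b - a] (T^[a] _) = _
    rw [← Function.iterate_add_apply, add_comm, Function.iterate_add_apply, h1]
  apply natExt_ext
  intro j
  have hinj : InjOn (T^[j]) (Function.periodicPts T) := by
    have hb := Function.bijOn_periodicPts (f := T)
    exact (hb.iterate j).injOn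
  apply hinj (per u hu j) (per v hv j)
  have h1 := iter_cd u j 0
  have h2 := iter_cd v j 0
  rw [zero_add] at h1 h2
  rw [h1, h2, h0]

end natext
end NEP

namespace NEP

section main
variable [MetricSpace X] [CompactSpace X] {T : X → X}

lemma image_pre (hsurj : Function.Surjective T) (K : Set X) : cd T 0 '' (cd T 0 ⁻¹' K) = K :=
  image_preimage_eq K (surj_cd_zero hsurj)

lemma compact_pre (hT : Continuous T) {K : Set X} (hK : IsCompact K) :
    IsCompact (cd T 0 ⁻¹' K) := by
  have := compact_natExt hT
  exact (hK.isClosed.preimage (continuous_cd 0)).isCompact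

lemma nonempty_pre (hsurj : Function.Surjective T) {K : Set X} (hK : K.Nonempty) :
    (cd T 0 ⁻¹' K).Nonempty := hK.preimage (surj_cd_zero hsurj)

lemma subEnt_pre (hT : Continuous T) (hsurj : Function.Surjective T) (K : Set X) :
    subEnt (natExtShift T) (cd T 0 ⁻¹' K) = subEnt T K := by
  rw [← subEnt_cd hT 0, image_pre hsurj]

lemma low_iff (hT : Continuous T) (hsurj : Function.Surjective T) :
    Lowerable (natExtShift T) ↔ Lowerable T := by
  have hu : subEnt (natExtShift T) univ = subEnt T univ := by
    rw [← subEnt_pre hT hsurj, preimage_univ]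
  constructor
  · intro H h h0 hh
    obtain ⟨K, hK, hKc, hKe⟩ := H h h0 (hh.trans hu.ge)
    exact ⟨cd T 0 '' K, hK.image _, hKc.image (continuous_cd 0), by rw [subEnt_cd hT, hKe]⟩
  · intro H h h0 hh
    obtain ⟨K, hK, hKc, hKe⟩ := H h h0 (hh.trans hu.le)
    exact ⟨cd T 0 ⁻¹' K, nonempty_pre hsurj hK, compact_pre hT hKc, by
      rw [subEnt_pre hT hsurj, hKe]⟩

lemma her_iff (hT : Continuous T) (hsurj : Function.Surjective T) :
    HerLowerable (natExtShift T) ↔ HerLowerable T := by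
  constructor
  · intro H K hK hKc h h0 hh
    obtain ⟨K', hK', hne, hc, he⟩ := H (cd T 0 ⁻¹' K) (nonempty_pre hsurj hK) (compact_pre hT hKc) h
      h0 (hh.trans (subEnt_pre hT hsurj K).ge)
    exact ⟨cd T 0 '' K', image_subset_iff.2 hK', hne.image _, hc.image (continuous_cd 0), by
      rw [subEnt_cd hT, he]⟩
  · intro H K hK hKc h h0 hh
    obtain ⟨K', hK', hne, hc, he⟩ := H (cd T 0 '' K) (hK.image _) (hKc.image (continuous_cd 0)) h
      h0 (hh.trans (subEnt_cd hT 0 K).ge)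
    have him : cd T 0 '' (K ∩ cd T 0 ⁻¹' K') = K' := by
      rw [image_inter_preimage, inter_eq_right.2 hK']
    refine ⟨K ∩ cd T 0 ⁻¹' K', inter_subset_left, ?_, ?_, ?_⟩
    · rw [← image_nonempty (f := cd T 0), him]
      exact hne
    · exact hKc.inter_right (hc.isClosed.preimage (continuous_cd 0))
    · rw [← subEnt_cd hT 0, him, he]

lemma acc_lift {Z : Type*} [MetricSpace Z] {f : Z → X} (hf : Continuous f) {K : Set Z}
    (hK : IsCompact K) {x : X} (hx : AccPt x (𝓟 (f '' K))) : ∃ z, AccPt z (𝓟 K) ∧ f z = x := by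
  by_contra hcon
  push Not at hcon
  have key : ∃ V ∈ 𝓝 x, (f '' (K ∩ K) ∩ V).Finite := by
    refine hK.induction_on (p := fun s => ∃ V ∈ 𝓝 x, (f '' (K ∩ s) ∩ V).Finite) ?_ ?_ ?_ ?_
    · exact ⟨univ, univ_mem, by simp⟩
    · rintro s t hst ⟨V, hV, h⟩
      exact ⟨V, hV, h.subset (inter_subset_inter_left _ (image_mono (inter_subset_inter_right _ hst)))⟩
    · rintro s t ⟨V, hV, h⟩ ⟨V', hV', h'⟩
      refine ⟨V ∩ V', inter_mem hV hV', (h.union h').subset ?_⟩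
      rintro _ ⟨⟨u, ⟨hu, hus | hut⟩, rfl⟩, h1, h2⟩
      · exact Or.inl ⟨⟨u, ⟨hu, hus⟩, rfl⟩, h1⟩
      · exact Or.inr ⟨⟨u, ⟨hu, hut⟩, rfl⟩, h2⟩
    · intro z hz
      by_cases hfz : f z = x
      · have : ¬ ∀ U ∈ 𝓝 z, (K ∩ U).Infinite := fun h => hcon z (accPt_of_infinite h) hfz
        push Not at this
        obtain ⟨U, hU, hfin⟩ := this
        exact ⟨U, mem_nhdsWithin_of_mem_nhds hU, univ, univ_mem, (hfin.image f).subset inter_subset_left⟩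
      · obtain ⟨V, W, hV, hW, hzV, hxW, hd⟩ := t2_separation hfz
        refine ⟨f ⁻¹' V, mem_nhdsWithin_of_mem_nhds ((hV.preimage hf).mem_nhds hzV), W,
          hW.mem_nhds hxW, ?_⟩
        convert finite_empty
        refine eq_empty_of_forall_notMem ?_
        rintro _ ⟨⟨u, ⟨_, hu⟩, rfl⟩, h2⟩
        exact disjoint_left.1 hd hu h2
  obtain ⟨V, hV, h⟩ := key
  rw [inter_self] at h
  exact accPt_inter_infinite hx hV h

lemma hul_down (hT : Continuous T) (hsurj : Function.Surjective T) (H : HUL (natExtShift T)) :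
    HUL T := by
  intro K hK hKc h h0 hh
  obtain ⟨K', hK', hne, hc, he, hacc⟩ := H (cd T 0 ⁻¹' K) (nonempty_pre hsurj hK)
    (compact_pre hT hKc) h h0 (hh.trans (subEnt_pre hT hsurj K).ge)
  refine ⟨cd T 0 '' K', image_subset_iff.2 hK', hne.image _, hc.image (continuous_cd 0), by
      rw [subEnt_cd hT, he], ?_⟩
  intro x hx y hy
  obtain ⟨u, hu, rfl⟩ := acc_lift (continuous_cd 0) hc hx
  obtain ⟨v, hv, rfl⟩ := acc_lift (continuous_cd 0) hc hy
  rw [hacc hu hv]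

/-- local entropy of `A` at `z` -/
def locEnt (S : X → X) (A : Set X) (z : X) : EReal :=
  ⨆ l : ℕ, ⨅ U ∈ 𝓝 z, sepEnt S (eps l) (A ∩ U)

lemma exists_seq {S : X → X} (A : Set X) (z : X) : ∃ I ⊆ A, ConvTo I z ∧
    locEnt S A z ≤ subEnt S I := by
  obtain ⟨I, hI, hc, h⟩ := exists_convTo (T := S) A z
  exact ⟨I, hI, hc, iSup_le fun l => (h l).trans (sepEnt_le_subEnt (eps_pos l))⟩

lemma exists_loc {S : X → X} {A : Set X} {b : EReal} (hb : b < subEnt S A) (hb0 : 0 ≤ b) :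
    ∃ z, AccPt z (𝓟 A) ∧ b < locEnt S A z := by
  rw [subEnt_eq, lt_iSup_iff] at hb
  obtain ⟨l, hl⟩ := hb
  obtain ⟨z, hz⟩ : ∃ z, ∀ U ∈ 𝓝 z, sepEnt S (eps l) A ≤ sepEnt S (eps l) (A ∩ U) := by
    by_contra hcon
    push Not at hcon
    have : sepEnt S (eps l) (A ∩ univ) < sepEnt S (eps l) A := by
      refine isCompact_univ.induction_on
        (p := fun s => sepEnt S (eps l) (A ∩ s) < sepEnt S (eps l) A) ?_ ?_ ?_ ?_
      · rw [inter_empty]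
        exact (sepEnt_finite finite_empty).trans_lt (hb0.trans_lt hl)
      · intro s t hst h
        exact (sepEnt_mono (inter_subset_inter_right _ hst)).trans_lt h
      · intro s t hs ht
        rw [inter_union_distrib_left]
        exact sepEnt_union.trans_lt (max_lt hs ht)
      · intro z _
        obtain ⟨U, hU, h⟩ := hcon z
        exact ⟨U, mem_nhdsWithin_of_mem_nhds hU, h⟩
    rw [inter_univ] at this
    exact lt_irrefl _ this
  refine ⟨z, accPt_of_infinite fun U hU hfin => ?_, ?_⟩
  · exact absurd ((hz U hU).trans (sepEnt_finite hfin)) (not_le.2 (hb0.trans_lt hl))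
  · exact (hl.trans_le (le_iInf₂ hz)).trans_le (le_iSup (fun l => ⨅ U ∈ 𝓝 z, sepEnt S (eps l) (A ∩ U)) l)

lemma exists_limit_loc {S : X → X} {A : Set X} {h : EReal} (hA : subEnt S A = h) (h0 : 0 < h) :
    ∃ z, ∀ W ∈ 𝓝 z, ∀ b < h, ∃ z' ∈ W, AccPt z' (𝓟 A) ∧ b < locEnt S A z' := by
  by_contra hcon
  push Not at hcon
  have : ∃ b < h, ∀ z' ∈ (univ : Set X), AccPt z' (𝓟 A) → locEnt S A z' ≤ b := by
    refine isCompact_univ.induction_on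
      (p := fun s => ∃ b < h, ∀ z' ∈ s, AccPt z' (𝓟 A) → locEnt S A z' ≤ b) ?_ ?_ ?_ ?_
    · exact ⟨0, h0, by simp⟩
    · rintro s t hst ⟨b, hb, H⟩
      exact ⟨b, hb, fun z hz => H z (hst hz)⟩
    · rintro s t ⟨b, hb, H⟩ ⟨b', hb', H'⟩
      refine ⟨max b b', max_lt hb hb', ?_⟩
      rintro z (hz | hz) hacc
      · exact (H z hz hacc).trans (le_max_left _ _)
      · exact (H' z hz hacc).trans (le_max_right _ _)
    · intro z _
      obtain ⟨W, hW, b, hb, H⟩ := hcon z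
      exact ⟨W, mem_nhdsWithin_of_mem_nhds hW, b, hb, H⟩
  obtain ⟨b, hb, H⟩ := this
  obtain ⟨z, hz, hbz⟩ := exists_loc (S := S) (A := A) (b := max b 0) (hA ▸ max_lt hb h0) (le_max_right _ _)
  exact absurd (H z (mem_univ _) hz) (not_le.2 ((le_max_left _ _).trans_lt hbz))

lemma hul_up (hT : Continuous T) (H : HUL T) : HUL (natExtShift T) := by
  have := compact_natExt hT
  intro K hK hKc h h0 hh
  rcases h0.eq_or_lt with rfl | h0
  · obtain ⟨y, hy⟩ := hK
    refine ⟨{y}, by simpa using hy, singleton_nonempty y, isCompact_singleton,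
      le_antisymm (subEnt_finite (finite_singleton y)) (subEnt_nonneg (singleton_nonempty y)), ?_⟩
    intro x hx
    exact absurd ((finite_singleton y).subset inter_subset_left) (accPt_inter_infinite hx univ_mem)
  obtain ⟨A0, hA0, -, -, hA0e, hA0acc⟩ := H (cd T 0 '' K) (hK.image _) (hKc.image (continuous_cd 0)) h
    h0.le (hh.trans (subEnt_cd hT 0 K).ge)
  obtain ⟨A, hAK, hbij⟩ := SurjOn.exists_bijOn_subset (show SurjOn (cd T 0) K A0 from hA0)
  have hAe : subEnt (natExtShift T) A = h := by
    rw [← subEnt_cd hT 0, hbij.image_eq, hA0e]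
  have hAacc : ∀ u v, AccPt u (𝓟 A) → AccPt v (𝓟 A) → cd T 0 u = cd T 0 v := by
    have : ∀ u, AccPt u (𝓟 A) → AccPt (cd T 0 u) (𝓟 A0) := by
      intro u hu
      refine accPt_of_infinite fun U hU => ?_
      have h1 := accPt_inter_infinite hu ((continuous_cd 0).continuousAt hU)
      refine (h1.image (hbij.injOn.mono inter_subset_left)).mono ?_
      rintro _ ⟨w, ⟨hw, hwU⟩, rfl⟩
      exact ⟨hbij.mapsTo hw, hwU⟩
    exact fun u v hu hv => hA0acc (this u hu) (this v hv)
  by_contra hcon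
  have N : ∀ (z : NatExt T) (I : Set (NatExt T)), I ⊆ A → ConvTo I z →
      subEnt (natExtShift T) I < h := by
    intro z I hI hc
    by_contra hlt
    push Not at hlt
    apply hcon
    have hIe : subEnt (natExtShift T) I = h := le_antisymm ((subEnt_mono hI).trans hAe.le) hlt
    have hinf : I.Infinite := fun hfin =>
      absurd (hlt.trans (subEnt_finite hfin)) (not_le.2 h0)
    have hzK : z ∈ K := by
      rw [← hKc.isClosed.closure_eq]
      exact closure_mono (hI.trans hAK) (mem_closure_iff_clusterPt.2 (hc.accPt hinf).clusterPt)
    refine ⟨insert z I, insert_subset hzK (hI.trans hAK), ⟨z, mem_insert _ _⟩,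
      hc.insert.isCompact (mem_insert _ _), ?_, ?_⟩
    · apply le_antisymm
      · exact subEnt_insert.trans (max_le hIe.le h0.le)
      · exact hlt.trans (subEnt_mono (subset_insert _ _))
    · intro u hu v hv
      rw [hc.insert.accPt_eq hu, hc.insert.accPt_eq hv]
  have N' : ∀ z, locEnt (natExtShift T) A z < h := by
    intro z
    obtain ⟨I, hI, hc, hle⟩ := exists_seq (S := natExtShift T) A z
    exact hle.trans_lt (N z I hI hc)
  obtain ⟨z0, hz0⟩ := exists_limit_loc hAe h0
  obtain ⟨c, hc1, hch⟩ := EReal.lt_iff_exists_real_btwn.1 (max_lt (N' z0) h0)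
  have hc0 : 0 < c := by exact_mod_cast (le_max_right _ _).trans_lt hc1
  refine not_HUL_of hT H hc0 hch fun b k F hb hF => ?_
  have hU : (⨅ U ∈ 𝓝 z0, sepEnt (natExtShift T) (eps k) (A ∩ U)) < c :=
    (le_iSup (fun l => ⨅ U ∈ 𝓝 z0, sepEnt (natExtShift T) (eps l) (A ∩ U)) k).trans_lt
      ((le_max_left _ _).trans_lt hc1)
  simp only [iInf_lt_iff] at hU
  obtain ⟨U, hU, hUc⟩ := hU
  obtain ⟨z1, hz1U, hz1, hbz1⟩ := hz0 _ (interior_mem_nhds.2 hU) (max b 0) (max_lt hb h0)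
  obtain ⟨z2, hz2U, hz2, hbz2⟩ := hz0 _ (interior_mem_nhds.2 hU) (locEnt (natExtShift T) A z1) (N' z1)
  have hne : z1 ≠ z2 := by
    rintro rfl
    exact lt_irrefl _ hbz2
  obtain ⟨z, m, hzU, hbz, hzm⟩ : ∃ (z : NatExt T) (m : ℕ), z ∈ interior U ∧
      max b 0 < locEnt (natExtShift T) A z ∧ cd T m z ∉ F := by
    by_contra hcon'
    push Not at hcon'
    exact hne (fibre_unique hF (hAacc _ _ hz1 hz2) (fun m => hcon' z1 m hz1U hbz1)
      (fun m => hcon' z2 m hz2U (hbz1.trans hbz2)))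
  obtain ⟨I, hI, hIc, hle⟩ := exists_seq (S := natExtShift T) A z
  refine ⟨cd T m z, cd T m '' (I ∩ U), hzm,
    (hIc.mono inter_subset_left).image (continuous_cd m), ?_, ?_, ?_⟩
  · rw [subEnt_cd hT]
    have h1 := hbz.trans_le (hle.trans (subEnt_inter_nhds hIc (mem_interior_iff_mem_nhds.1 hzU)))
    rcases lt_max_iff.1 h1 with h2 | h2
    · exact (le_max_left _ _).trans_lt h2
    · exact absurd (le_max_right b 0) (not_le.2 h2)
  · rw [subEnt_cd hT]
    exact (subEnt_mono inter_subset_left).trans_lt (N z I hI hIc)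
  · exact ((sepEnt_down hT m (eps_pos k) (eps_lt_one k) _).trans
      (sepEnt_mono (inter_subset_inter_left _ hI))).trans_lt hUc

lemma hStar_mono {S : X → X} {ε ε' : ℝ} (h : ε ≤ ε') : hStar S ε ≤ hStar S ε' :=
  iSup_mono fun _ => subEnt_mono fun _ hy n => (hy n).trans h

lemma hStar_nonneg {S : X → X} [Nonempty X] {ε : ℝ} (h : 0 < ε) : 0 ≤ hStar S ε := by
  obtain ⟨x⟩ := ‹Nonempty X›
  have hne : (Phi S ε x).Nonempty := ⟨x, fun n => by simpa using h.le⟩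
  exact (subEnt_nonneg hne).trans (le_iSup (fun x => subEnt S (Phi S ε x)) x)

lemma asymp_iff {S : X → X} [Nonempty X] :
    AsympHExpansive S ↔ ∀ a : EReal, 0 < a → ∃ ε > 0, hStar S ε < a := by
  unfold AsympHExpansive
  constructor
  · intro H a ha
    have h1 : ∀ᶠ ε in 𝓝[>] (0 : ℝ), hStar S ε < a := H (Iio_mem_nhds ha)
    obtain ⟨ε, h2, h3⟩ := (h1.and self_mem_nhdsWithin).exists
    exact ⟨ε, h3, h2⟩
  · intro H
    rw [tendsto_order]
    constructor
    · intro a ha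
      filter_upwards [self_mem_nhdsWithin] with ε hε
      exact ha.trans_le (hStar_nonneg hε)
    · intro a ha
      obtain ⟨ε, hε, hlt⟩ := H a ha
      filter_upwards [Ioo_mem_nhdsGT hε] with ε' hε'
      exact (hStar_mono hε'.2.le).trans_lt hlt

lemma subEnt_biUnion {S : X → X} {M : ℕ} {P : Fin M → Set X} {a : EReal} (h0 : 0 ≤ a)
    (h : ∀ j, subEnt S (P j) ≤ a) : subEnt S (⋃ j, P j) ≤ a := by
  have : ∀ t : Finset (Fin M), subEnt S (⋃ j ∈ t, P j) ≤ a := by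
    classical
    intro t
    induction t using Finset.induction_on with
    | empty => simpa using (subEnt_finite (T := S) finite_empty).trans h0
    | insert j t _ ih =>
      rw [Finset.set_biUnion_insert]
      exact subEnt_union.trans (max_le (h j) ih)
  simpa using this Finset.univ

lemma asymp_main (hT : Continuous T) (hsurj : Function.Surjective T) :
    AsympHExpansive (natExtShift T) ↔ AsympHExpansive T := by
  have := compact_natExt hT
  rcases isEmpty_or_nonempty X with hX | hX
  · have : IsEmpty (NatExt T) := ⟨fun u => hX.false (cd T 0 u)⟩
    simp [AsympHExpansive, hStar]
  have hN : Nonempty (NatExt T) := (surj_cd_zero hsurj).nonempty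
  rw [asymp_iff, asymp_iff]
  constructor
  · intro H a ha
    obtain ⟨ε, hε, hlt⟩ := H a ha
    obtain ⟨δ, hδ, M, c, hc⟩ := classes_up hT 0 hε
    refine ⟨δ / 2, half_pos hδ, lt_of_le_of_lt (iSup_le fun x => ?_) hlt⟩
    rw [← subEnt_pre hT hsurj]
    have hun : cd T 0 ⁻¹' Phi T (δ / 2) x = ⋃ j, {u | u ∈ cd T 0 ⁻¹' Phi T (δ / 2) x ∧ c u = j} := by
      ext u
      simp
    rw [hun]
    refine subEnt_biUnion (hStar_nonneg hε) fun j => ?_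
    rcases eq_empty_or_nonempty {u | u ∈ cd T 0 ⁻¹' Phi T (δ / 2) x ∧ c u = j} with he | ⟨v, hv, hvj⟩
    · rw [he]
      exact (subEnt_finite finite_empty).trans (hStar_nonneg hε)
    · refine (subEnt_mono ?_).trans (le_iSup (fun y => subEnt (natExtShift T) (Phi (natExtShift T) ε y)) v)
      rintro u ⟨hu, huj⟩ n
      refine hc (n + 1) v u (hvj.trans huj.symm) (fun i _ => ?_) n (Nat.lt_succ_self n)
      have h1 := hv i
      have h2 := hu i
      have := dist_triangle_left (T^[i] (cd T 0 v)) (T^[i] (cd T 0 u)) (T^[i] x)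
      linarith
  · intro H a ha
    obtain ⟨ε, hε, hlt⟩ := H a ha
    refine ⟨min ε (1 / 2), lt_min hε (by norm_num), lt_of_le_of_lt (iSup_le fun y => ?_) hlt⟩
    rw [← subEnt_cd hT 0]
    refine (subEnt_mono ?_).trans (le_iSup (fun x => subEnt T (Phi T ε x)) (cd T 0 y))
    rintro _ ⟨u, hu, rfl⟩ n
    have h1 := hu n
    have h2 : dist ((natExtShift T)^[n] y) ((natExtShift T)^[n] u) < 1 :=
      lt_of_le_of_lt (h1.trans (min_le_right _ _)) (by norm_num)
    have h3 := dist_cd_zero_le h2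
    rw [cd_iter, cd_iter] at h3
    exact h3.trans (h1.trans (min_le_left _ _))

end main
end NEP

/-- The natural extension `(X_T,S)` of a surjective GTDS `(X,T)` is
lowerable (resp. hereditarily lowerable, HUL, asymptotically `h`-expansive) iff so is
`(X,T)`. -/
theorem natural_extension_preserves {X : Type*} [MetricSpace X] [CompactSpace X]
    (T : X → X) (hT : Continuous T) (hsurj : Function.Surjective T) :
    (Lowerable (natExtShift T) ↔ Lowerable T) ∧
    (HerLowerable (natExtShift T) ↔ HerLowerable T) ∧
    (HUL (natExtShift T) ↔ HUL T) ∧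
    (AsympHExpansive (natExtShift T) ↔ AsympHExpansive T) := by
  exact ⟨NEP.low_iff hT hsurj, NEP.her_iff hT hsurj,
    ⟨NEP.hul_down hT hsurj, NEP.hul_up hT⟩, NEP.asymp_main hT hsurj⟩
end
end
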